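/- arXiv:1610.06731 — 9 statements merged into one kernel-verified Lean document; each statement's English description precedes it below -/
import Mathlib

section
/- Let d ≥ 1, let h_1,…,h_d > 0, λ_1,…,λ_d > 0 and L > 0. Then the minimax interpolation error inf over measurable kernels K̂ : ℝ^d → ℝ of the supremum over F ∈ 𝓕(L, λ) of Φ_H(F, K̂) equals (L / (2π²)) · max_{i ∈ {1,…,d}} (h_i / λ_i)². -/
open MeasureTheory Real

/-- The interpolation-error functional
`Φ_H(F, K̂) = ∫_{ℝ^d} F(ω) [(1 − K̂(ω))² + ∑_{k ∈ ℤ^d, k ≠ 0} K̂(ω + H⁻¹k)²] dω`,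
where `H = diag(h₁,…,h_d)` and the inner sum is a (possibly infinite) sum of
nonnegative terms, so the value is taken in `ℝ≥0∞`. -/
noncomputable def Phi (d : ℕ) (h : Fin d → ℝ) (F : (Fin d → ℝ) → ℝ)
    (K : (Fin d → ℝ) → ℝ) : ENNReal :=
  ∫⁻ ω : Fin d → ℝ, ENNReal.ofReal (F ω) *
    (ENNReal.ofReal ((1 - K ω) ^ 2) +
      ∑' k : {k : Fin d → ℤ // k ≠ 0},
        ENNReal.ofReal ((K (ω + fun i => (k.1 i : ℝ) / h i)) ^ 2))

/-- The smoothness class `𝓕(L, λ)` of spectral densities: measurable, integrable,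
nonnegative `F` with `(2π)² ∫ F(ω) ∑ᵢ λᵢ² ωᵢ² dω ≤ L`. -/
def SpecClass (d : ℕ) (L : ℝ) (lam : Fin d → ℝ) : Set ((Fin d → ℝ) → ℝ) :=
  {F | Measurable F ∧ Integrable F ∧ (∀ ω, 0 ≤ F ω) ∧
    ENNReal.ofReal ((2 * π) ^ 2) *
      ∫⁻ ω : Fin d → ℝ, ENNReal.ofReal (F ω * ∑ i, (lam i) ^ 2 * (ω i) ^ 2)
        ≤ ENNReal.ofReal L}

/-- pair value -/
noncomputable def pv {d : ℕ} (w : Fin d → ℝ) (q : Fin d × Fin d) : ℝ :=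
  if q.1 = q.2 then |w q.1| else |w q.1| + |w q.2|

/-- sum of the two largest absolute values -/
noncomputable def NN {d : ℕ} (w : Fin d → ℝ) : ℝ := ⨆ q : Fin d × Fin d, pv w q

/-- optimal kernel (normalised) -/
noncomputable def K0 {d : ℕ} (w : Fin d → ℝ) : ℝ := max 0 (1 - NN w)

lemma pv_le {d : ℕ} (w : Fin d → ℝ) (q : Fin d × Fin d) : pv w q ≤ NN w :=
  le_ciSup (f := fun q => pv w q) (Set.finite_range _).bddAbove q

lemma NN_diag {d : ℕ} (w : Fin d → ℝ) (i : Fin d) : |w i| ≤ NN w := by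
  simpa [pv] using pv_le w (i, i)

lemma NN_pair {d : ℕ} (w : Fin d → ℝ) (i j : Fin d) (hij : i ≠ j) :
    |w i| + |w j| ≤ NN w := by
  simpa [pv, hij] using pv_le w (i, j)

lemma K0_meas {d : ℕ} : Measurable (K0 : (Fin d → ℝ) → ℝ) := by
  have : Measurable (NN : (Fin d → ℝ) → ℝ) := by
    unfold NN
    refine Measurable.iSup fun q => ?_
    unfold pv
    split_ifs
    · exact (measurable_pi_apply _).abs
    · exact (measurable_pi_apply _).abs.add (measurable_pi_apply _).abs
  exact measurable_const.max (measurable_const.sub this)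

lemma sq_ge_of_abs {a b : ℝ} (h : |a| ≤ |b|) : a ^ 2 ≤ b ^ 2 := sq_le_sq.mpr h

lemma abs_shift {u : ℝ} (hu : |u| ≤ 1 / 2) {n : ℤ} (hn : n ≠ 0) : 1 - |u| ≤ |u + n| := by
  have h1 : (1 : ℝ) ≤ |(n : ℝ)| := by exact_mod_cast Int.one_le_abs hn
  have h2 := abs_sub_abs_le_abs_sub (n : ℝ) (-u)
  rw [abs_neg, sub_neg_eq_add, add_comm (n : ℝ)] at h2
  linarith

lemma abs_shift' {u : ℝ} (hu : |u| ≤ 1 / 2) (n : ℤ) : |u| ≤ |u + n| := by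
  by_cases hn : n = 0
  · simp [hn]
  · have := abs_shift hu hn; linarith

/-- the structure of the two largest entries -/
lemma exists_z {d : ℕ} (u : Fin d → ℝ) (p : Fin d) (hp : ∀ i, |u i| ≤ |u p|) :
    ∃ z : ℝ, 0 ≤ z ∧ z ≤ |u p| ∧ (∀ i, i ≠ p → |u i| ≤ z) ∧ NN u = |u p| + z ∧
      (z = 0 ∨ ∃ i, i ≠ p ∧ z ≤ |u i|) := by
  have : Nonempty (Fin d × Fin d) := ⟨(p, p)⟩
  obtain ⟨⟨a, b⟩, hab⟩ := exists_eq_ciSup_of_finite (f := fun q : Fin d × Fin d => pv u q)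
  have hab : pv u (a, b) = NN u := hab
  have h0 := NN_diag u p
  refine ⟨NN u - |u p|, by linarith, ?_, ?_, by ring, ?_⟩
  · rw [← hab]; unfold pv; dsimp
    have := hp a; have := hp b; have := abs_nonneg (u p)
    split_ifs <;> linarith
  · intro i hi
    have := NN_pair u p i (Ne.symm hi)
    linarith
  · by_cases h : a = b
    · left
      have : NN u = |u a| := by rw [← hab]; simp [pv, h]
      have := hp a; linarith
    · right
      have h1 : NN u = |u a| + |u b| := by rw [← hab]; simp [pv, h]
      have := hp a; have := hp b
      by_cases hap : a = p
      · exact ⟨b, fun hb => h (hap.trans hb.symm), by rw [h1, hap]; linarith⟩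
      · exact ⟨a, hap, by linarith⟩

lemma sum_two {d : ℕ} (y : Fin d → ℝ) (p i : Fin d) (hi : i ≠ p) :
    y p ^ 2 + y i ^ 2 ≤ ∑ l, y l ^ 2 := by
  have := Finset.sum_le_sum_of_subset_of_nonneg (Finset.subset_univ ({p, i} : Finset (Fin d)))
    (f := fun l => y l ^ 2) (fun _ _ _ => sq_nonneg _)
  rwa [Finset.sum_pair (Ne.symm hi)] at this

lemma sum_one {d : ℕ} (y : Fin d → ℝ) (p : Fin d) :
    y p ^ 2 ≤ ∑ l, y l ^ 2 :=
  Finset.single_le_sum (f := fun l => y l ^ 2) (fun _ _ => sq_nonneg _) (Finset.mem_univ p)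

/-- main structural lemma about the orbit of a reduced point -/
lemma orbit {d : ℕ} (hd : 1 ≤ d) (u : Fin d → ℝ) (hu : ∀ i, |u i| ≤ 1 / 2) :
    ∃ (A B : ℝ) (q : Fin d → ℤ), q ≠ 0 ∧
      K0 u = A ∧ K0 (fun i => u i + q i) = B ∧
      (1 - A) ^ 2 + B ^ 2 ≤ 2 * ∑ i, u i ^ 2 ∧
      (1 - B) ^ 2 + A ^ 2 ≤ 2 * ∑ i, (u i + q i) ^ 2 ∧
      ∀ j : Fin d → ℤ, j ≠ 0 → j ≠ q → K0 (fun i => u i + j i) = 0 ∧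
        1 + A ^ 2 + B ^ 2 ≤ 2 * ∑ i, (u i + j i) ^ 2 := by
  have : Nonempty (Fin d) := ⟨⟨0, hd⟩⟩
  obtain ⟨p, hp⟩ := Finite.exists_max (fun i => |u i|)
  obtain ⟨z, hz0, hzm, hzi, hN, hz⟩ := exists_z u p hp
  set m := |u p| with hm
  have hm2 : m ≤ 1 / 2 := hu p
  have hm0 : 0 ≤ m := abs_nonneg _
  obtain ⟨σ, hσ0, hσ, hσ'⟩ : ∃ σ : ℤ, σ ≠ 0 ∧ |u p + σ| = 1 - m ∧
      ∀ n : ℤ, n ≠ 0 → n ≠ σ → 1 ≤ |u p + n| := by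
    rcases le_total 0 (u p) with h | h
    · have hm' : m = u p := by rw [hm, abs_of_nonneg h]
      refine ⟨-1, by norm_num, ?_, ?_⟩
      · push_cast; rw [abs_of_nonpos (by linarith)]; linarith
      · intro n h0 h1
        rcases lt_or_gt_of_ne h0 with h2 | h2
        · have : (n : ℝ) ≤ -2 := by exact_mod_cast (show n ≤ -2 by omega)
          rw [abs_of_nonpos (by linarith)]; linarith
        · have : (1 : ℝ) ≤ n := by exact_mod_cast h2
          rw [abs_of_nonneg (by linarith)]; linarith
    · have hm' : m = -u p := by rw [hm, abs_of_nonpos h]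
      refine ⟨1, by norm_num, ?_, ?_⟩
      · push_cast; rw [abs_of_nonneg (by linarith)]; linarith
      · intro n h0 h1
        rcases lt_or_gt_of_ne h0 with h2 | h2
        · have : (n : ℝ) ≤ -1 := by exact_mod_cast (show n ≤ -1 by omega)
          rw [abs_of_nonpos (by linarith)]; linarith
        · have : (2 : ℝ) ≤ n := by exact_mod_cast (show 2 ≤ n by omega)
          rw [abs_of_nonneg (by linarith)]; linarith
  have hsum : ∀ y : Fin d → ℝ, (∀ i, i ≠ p → |u i| ≤ |y i|) →
      y p ^ 2 + z ^ 2 ≤ ∑ i, y i ^ 2 := by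
    intro y hy
    rcases hz with hz | ⟨i, hi, hzi'⟩
    · rw [hz]; have := sum_one y p; linarith
    · have h1 := sum_two y p i hi
      have h2 : z ^ 2 ≤ y i ^ 2 := sq_le_sq.mpr (by
        rw [abs_of_nonneg hz0]; exact hzi'.trans (hy i hi))
      linarith
  have hq : (Pi.single p σ : Fin d → ℤ) ≠ 0 := by simpa using hσ0
  have hw1 : ∀ i, i ≠ p → u i + ((Pi.single p σ : Fin d → ℤ) i : ℝ) = u i := by
    intro i hi; simp [hi]
  have hwp : |u p + ((Pi.single p σ : Fin d → ℤ) p : ℝ)| = 1 - m := by simpa using hσ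
  have hup : u p ^ 2 = m ^ 2 := by rw [hm, sq_abs]
  refine ⟨1 - m - z, m - z, Pi.single p σ, hq, ?_, ?_, ?_, ?_, ?_⟩
  · unfold K0; rw [hN, max_eq_right (by linarith)]; ring
  · have hNw : NN (fun i => u i + ((Pi.single p σ : Fin d → ℤ) i : ℝ)) = 1 - m + z := by
      set w : Fin d → ℝ := fun i => u i + ((Pi.single p σ : Fin d → ℤ) i : ℝ) with hw
      have e1 : |w p| = 1 - m := hwp
      have e2 : ∀ i, i ≠ p → |w i| = |u i| := fun i hi => by rw [hw]; simp [hi]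
      have e3 : ∀ i, i ≠ p → |w i| ≤ z := fun i hi => by rw [e2 i hi]; exact hzi i hi
      apply le_antisymm
      · have : Nonempty (Fin d × Fin d) := ⟨(p, p)⟩
        refine ciSup_le ?_
        rintro ⟨a, b⟩
        unfold pv; dsimp only
        by_cases ha : a = p <;> by_cases hb : b = p
        · subst ha; subst hb; simp only [if_true]; linarith
        · rw [if_neg (by rw [ha]; exact Ne.symm hb), ha, e1]; linarith [e3 b hb]
        · rw [if_neg (by rw [hb]; exact ha), hb, e1]; linarith [e3 a ha]
        · have := e3 a ha; have := e3 b hb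
          split_ifs <;> linarith
      · rcases hz with hz | ⟨i, hi, hzi'⟩
        · have := NN_diag w p; linarith
        · have := NN_pair w p i (Ne.symm hi)
          rw [e1, e2 i hi] at this; linarith
    unfold K0; rw [hNw, max_eq_right (by linarith)]; ring
  · have := hsum u (fun _ _ => le_rfl)
    nlinarith
  · have := hsum (fun i => u i + ((Pi.single p σ : Fin d → ℤ) i : ℝ))
      (fun i hi => by rw [hw1 i hi])
    have h2 : (u p + ((Pi.single p σ : Fin d → ℤ) p : ℝ)) ^ 2 = (1 - m) ^ 2 := by
      rw [← hwp, sq_abs]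
    rw [h2] at this
    nlinarith
  · intro j hj0 hjq
    set w : Fin d → ℝ := fun i => u i + (j i : ℝ) with hw
    have hge : ∀ i, |u i| ≤ |w i| := fun i => abs_shift' (hu i) (j i)
    suffices h : 1 ≤ NN w ∧ m ^ 2 + z ^ 2 + 1 - m - z ≤ ∑ i, w i ^ 2 by
      refine ⟨?_, ?_⟩
      · unfold K0; exact max_eq_left (by linarith [h.1])
      · have := h.2
        have e : ∑ i, (u i + (j i : ℝ)) ^ 2 = ∑ i, w i ^ 2 := rfl
        rw [e]; nlinarith
    by_cases hex : ∃ i, i ≠ p ∧ j i ≠ 0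
    · obtain ⟨i, hi, hji⟩ := hex
      have hwi : 1 - |u i| ≤ |w i| := abs_shift (hu i) hji
      have h1 := hp i
      have h2 := hzi i hi
      refine ⟨?_, ?_⟩
      · have := NN_pair w i p hi
        have := hge p
        linarith
      · have hs : ∑ l, u l ^ 2 + (w i ^ 2 - u i ^ 2) ≤ ∑ l, w l ^ 2 := by
          have := Finset.single_le_sum (f := fun l => w l ^ 2 - u l ^ 2)
            (fun l _ => sub_nonneg.mpr (sq_ge_of_abs (hge l))) (Finset.mem_univ i)
          rw [Finset.sum_sub_distrib] at this
          linarith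
        have hu2 := hsum u (fun _ _ => le_rfl)
        have h5 : (1 - |u i|) ^ 2 ≤ w i ^ 2 := by
          rw [← sq_abs (w i)]
          have := hu i
          exact pow_le_pow_left₀ (by linarith) hwi 2
        have h6 := sq_abs (u i)
        nlinarith
    · push Not at hex
      have hjp0 : j p ≠ 0 := by
        intro h0; apply hj0; ext i
        by_cases hi : i = p
        · rw [hi, h0]; rfl
        · rw [hex i hi]; rfl
      have hjps : j p ≠ σ := by
        intro h0; apply hjq; ext i
        by_cases hi : i = p
        · rw [hi, h0]; simp
        · rw [hex i hi]; simp [hi]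
      have hwp1 : 1 ≤ |w p| := hσ' _ hjp0 hjps
      refine ⟨hwp1.trans (NN_diag w p), ?_⟩
      have := hsum w (fun i _ => hge i)
      have h5 : 1 ≤ w p ^ 2 := by rw [← sq_abs]; nlinarith
      nlinarith

/-- the bracket in `Phi` -/
noncomputable def GG {d : ℕ} (h : Fin d → ℝ) (K : (Fin d → ℝ) → ℝ) (ω : Fin d → ℝ) : ENNReal :=
  (ENNReal.ofReal ((1 - K ω) ^ 2) +
      ∑' k : {k : Fin d → ℤ // k ≠ 0},
        ENNReal.ofReal ((K (ω + fun i => (k.1 i : ℝ) / h i)) ^ 2))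

lemma GG_meas {d : ℕ} (h : Fin d → ℝ) (K : (Fin d → ℝ) → ℝ) (hK : Measurable K) :
    Measurable (GG h K) := by
  unfold GG
  apply Measurable.fun_add
  · exact ((hK.const_sub 1).pow_const 2).ennreal_ofReal
  · refine Measurable.ennreal_tsum fun k => ?_
    exact ((hK.comp (measurable_id.add_const _)).pow_const 2).ennreal_ofReal

lemma tsum_two {ι : Type*} [DecidableEq ι] (o a b : ι) (hab : a ≠ b) (f : ι → ENNReal)
    (hf : ∀ k, k ≠ a → k ≠ b → f k = 0) :
    ∑' k : {k : ι // k ≠ o}, f k.1 = (if a = o then 0 else f a) + (if b = o then 0 else f b) := by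
  have h1 : ∑' k : {k : ι // k ≠ o}, f k.1 = ∑' k, Set.indicator {k : ι | k ≠ o} f k :=
    tsum_subtype {k : ι | k ≠ o} f
  rw [h1, tsum_eq_sum (s := {a, b})]
  · rw [Finset.sum_pair hab]; simp [Set.indicator_apply]
  · intro k hk
    simp only [Finset.mem_insert, Finset.mem_singleton, not_or] at hk
    simp [Set.indicator_apply, hf k hk.1 hk.2]

lemma GG_le {d : ℕ} (hd : 1 ≤ d) (h : Fin d → ℝ) (hh : ∀ i, 0 < h i) (ω : Fin d → ℝ) :
    GG h (fun w => K0 (fun i => h i * w i)) ω ≤ ENNReal.ofReal (2 * ∑ i, (h i * ω i) ^ 2) := by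
  classical
  set x : Fin d → ℝ := fun i => h i * ω i with hx
  set r : Fin d → ℤ := fun i => round (x i) with hr
  set u : Fin d → ℝ := fun i => x i - r i with hu
  obtain ⟨A, B, q, hq, hA, hB, h1, h2, h3⟩ := orbit hd u (fun i => abs_sub_round (x i))
  have key : ∀ k : Fin d → ℤ, K0 (fun i => h i * (ω + fun i => (k i : ℝ) / h i) i)
      = K0 (fun i => u i + ((k + r) i : ℤ)) := by
    intro k; congr 1; ext i
    have := (hh i).ne'
    simp only [hu, hx, Pi.add_apply, Int.cast_add]
    field_simp; ring
  have key0 : ∀ i, x i = u i + (r i : ℝ) := fun i => by simp [hu]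
  have hxe : x = fun i => u i + (r i : ℝ) := funext key0
  have T := tsum_two (0 : Fin d → ℤ) (-r) (q - r) (by
      intro e; apply hq; have := congrArg (· + r) e; simpa using this.symm)
    (fun k => ENNReal.ofReal (K0 (fun i => u i + ((k + r) i : ℤ)) ^ 2)) (by
      intro k hk1 hk2
      have := (h3 (k + r) (fun e => hk1 (eq_neg_of_add_eq_zero_left e))
        (fun e => hk2 (eq_sub_of_add_eq e))).1
      rw [this]; simp)
  have eA : K0 (fun i => u i + (((-r + r) i : ℤ) : ℝ)) = A := by
    rw [← hA]; congr 1; ext i; simp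
  have eB : K0 (fun i => u i + (((q - r + r) i : ℤ) : ℝ)) = B := by
    rw [← hB]; congr 1; ext i; simp
  rw [eA, eB] at T
  unfold GG
  simp only [key]
  rw [T]
  change ENNReal.ofReal ((1 - K0 x) ^ 2) + _ ≤ ENNReal.ofReal (2 * ∑ i, x i ^ 2)
  by_cases c1 : r = 0
  · have : x = u := by rw [hxe, c1]; simp
    have hqr : q - r ≠ 0 := by rw [c1, sub_zero]; exact hq
    rw [if_pos (by rw [c1, neg_zero]), if_neg hqr, this, hA, zero_add,
      ← ENNReal.ofReal_add (sq_nonneg _) (sq_nonneg _)]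
    exact ENNReal.ofReal_le_ofReal h1
  · by_cases c2 : r = q
    · rw [if_neg (by simpa using c1), if_pos (by rw [c2, sub_self]), hxe, c2, hB, add_zero,
        ← ENNReal.ofReal_add (sq_nonneg _) (sq_nonneg _)]
      exact ENNReal.ofReal_le_ofReal h2
    · obtain ⟨h4, h5⟩ := h3 r c1 c2
      rw [if_neg (by simpa using c1), if_neg (fun e => c2 (sub_eq_zero.mp e).symm), hxe, h4,
        ← ENNReal.ofReal_add (sq_nonneg _) (sq_nonneg _),
        ← ENNReal.ofReal_add (sq_nonneg _) (by positivity)]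
      apply ENNReal.ofReal_le_ofReal
      linarith

lemma upper (d : ℕ) (hd : 1 ≤ d) (h lam : Fin d → ℝ)
    (hh : ∀ i, 0 < h i) (hlam : ∀ i, 0 < lam i) (L : ℝ) (hL : 0 < L)
    (M : ℝ) (hM : ∀ i, (h i / lam i) ^ 2 ≤ M) (F : (Fin d → ℝ) → ℝ)
    (hF : F ∈ SpecClass d L lam) :
    Phi d h F (fun w => K0 (fun i => h i * w i)) ≤ ENNReal.ofReal (L / (2 * π ^ 2) * M) := by
  obtain ⟨hFm, -, hF0, hFL⟩ := hF
  have hM0 : 0 ≤ M := (sq_nonneg _).trans (hM ⟨0, hd⟩)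
  have hC : 0 ≤ M / (2 * π ^ 2) := by positivity
  calc Phi d h F (fun w => K0 (fun i => h i * w i))
      = ∫⁻ ω, ENNReal.ofReal (F ω) * GG h (fun w => K0 (fun i => h i * w i)) ω := rfl
    _ ≤ ∫⁻ ω : Fin d → ℝ, ENNReal.ofReal (M / (2 * π ^ 2)) * (ENNReal.ofReal ((2 * π) ^ 2) *
          ENNReal.ofReal (F ω * ∑ i, (lam i) ^ 2 * (ω i) ^ 2)) := by
        refine lintegral_mono fun ω => ?_
        refine (mul_le_mul_right (GG_le hd h hh ω) _).trans ?_
        rw [← ENNReal.ofReal_mul (hF0 ω), ← ENNReal.ofReal_mul (by positivity),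
          ← ENNReal.ofReal_mul hC]
        apply ENNReal.ofReal_le_ofReal
        have : M / (2 * π ^ 2) * ((2 * π) ^ 2 * (F ω * ∑ i, lam i ^ 2 * ω i ^ 2))
            = F ω * (2 * ∑ i, M * (lam i ^ 2 * ω i ^ 2)) := by
          rw [← Finset.mul_sum]
          have := Real.pi_ne_zero
          field_simp
        rw [this]
        refine mul_le_mul_of_nonneg_left ?_ (hF0 ω)
        refine mul_le_mul_of_nonneg_left (Finset.sum_le_sum fun i _ => ?_) (by norm_num)
        have h1 := hM i
        rw [div_pow, div_le_iff₀ (by have := hlam i; positivity)] at h1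
        have := mul_le_mul_of_nonneg_right h1 (sq_nonneg (ω i))
        nlinarith
    _ = ENNReal.ofReal (M / (2 * π ^ 2)) * (ENNReal.ofReal ((2 * π) ^ 2) *
          ∫⁻ ω : Fin d → ℝ, ENNReal.ofReal (F ω * ∑ i, (lam i) ^ 2 * (ω i) ^ 2)) := by
        rw [lintegral_const_mul' _ _ ENNReal.ofReal_ne_top,
          lintegral_const_mul' _ _ ENNReal.ofReal_ne_top]
    _ ≤ ENNReal.ofReal (M / (2 * π ^ 2)) * ENNReal.ofReal L := mul_le_mul_right hFL _
    _ = _ := by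
        rw [← ENNReal.ofReal_mul hC]; congr 1; ring

lemma GG_pair {d : ℕ} (h : Fin d → ℝ) (K : (Fin d → ℝ) → ℝ) (p : Fin d) (ω : Fin d → ℝ) :
    1 ≤ GG h K ω + GG h K (ω - Pi.single p (1 / h p)) := by
  have e : ∀ (s : ℤ), (fun i => ((Pi.single p s : Fin d → ℤ) i : ℝ) / h i)
      = Pi.single p (s / h p) := by
    intro s; ext i
    by_cases hi : i = p
    · subst hi; simp
    · simp [hi]
  have g : ∀ (w : Fin d → ℝ) (s : ℤ), s ≠ 0 →
      ENNReal.ofReal ((1 - K w) ^ 2) + ENNReal.ofReal (K (w + Pi.single p (s / h p)) ^ 2)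
        ≤ GG h K w := by
    intro w s hs
    unfold GG
    refine add_le_add_right ?_ _
    have := ENNReal.le_tsum (f := fun k : {k : Fin d → ℤ // k ≠ 0} =>
        ENNReal.ofReal ((K (w + fun i => (k.1 i : ℝ) / h i)) ^ 2))
        ⟨Pi.single p s, by simpa using hs⟩
    dsimp only at this
    rwa [e s] at this
  set v : Fin d → ℝ := Pi.single p (1 / h p) with hv
  have g1 := g ω (-1) (by norm_num)
  have g2 := g (ω - v) 1 (by norm_num)
  have e1 : ω + Pi.single p (((-1 : ℤ) : ℝ) / h p) = ω - v := by
    rw [hv, sub_eq_add_neg, ← Pi.single_neg]; congr 2; push_cast; ring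
  have e2 : ω - v + Pi.single p (((1 : ℤ) : ℝ) / h p) = ω := by
    rw [hv]; push_cast; simp
  rw [e1] at g1
  rw [e2] at g2
  refine le_trans ?_ (add_le_add g1 g2)
  rw [← ENNReal.ofReal_add (sq_nonneg _) (sq_nonneg _),
    ← ENNReal.ofReal_add (sq_nonneg _) (sq_nonneg _),
    ← ENNReal.ofReal_add (by positivity) (by positivity), ← ENNReal.ofReal_one]
  apply ENNReal.ofReal_le_ofReal
  nlinarith [sq_nonneg (2 * K ω - 1), sq_nonneg (2 * K (ω - v) - 1)]

lemma lower (d : ℕ) (h lam : Fin d → ℝ)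
    (hh : ∀ i, 0 < h i) (hlam : ∀ i, 0 < lam i) (L : ℝ) (hL : 0 < L)
    (p : Fin d) (K : (Fin d → ℝ) → ℝ) (hK : Measurable K) (ρ : ℝ) (hρ : 0 < ρ) :
    ENNReal.ofReal (L / (2 * ((2 * π) ^ 2 *
      ∑ i, lam i ^ 2 * ((Pi.single p (1 / (2 * h p)) : Fin d → ℝ) i + ρ) ^ 2))) ≤
    ⨆ F ∈ SpecClass d L lam, Phi d h F K := by
  set c : Fin d → ℝ := Pi.single p (1 / (2 * h p)) with hc
  set v : Fin d → ℝ := Pi.single p (1 / h p) with hv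
  set Q : (Fin d → ℝ) → ℝ := fun ω => ∑ i, lam i ^ 2 * ω i ^ 2 with hQ
  set R : ℝ := ∑ i, lam i ^ 2 * (c i + ρ) ^ 2 with hR
  have hcv : c - v = -c := by
    ext i
    by_cases hi : i = p
    · subst hi; have := (hh i).ne'; simp [hc, hv]; field_simp; ring
    · simp [hc, hv, hi]
  have hc0 : ∀ i, 0 ≤ c i := fun i => by
    by_cases hi : i = p
    · subst hi; have := (hh i); simp [hc]; positivity
    · simp [hc, hi]
  have hRpos : 0 < R := by
    refine Finset.sum_pos (fun i _ => ?_) ⟨p, Finset.mem_univ p⟩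
    have := hlam i; have := hc0 i; positivity
  set D := Metric.ball c ρ with hD
  have hDm : MeasurableSet D := Metric.isOpen_ball.measurableSet
  have hDtop : volume D ≠ ⊤ := measure_ball_lt_top.ne
  have hD0 : volume D ≠ 0 := (Metric.measure_ball_pos volume c hρ).ne'
  set V := (volume D).toReal with hV
  have hVpos : 0 < V := ENNReal.toReal_pos hD0 hDtop
  have hQm : Measurable Q := by
    refine Finset.measurable_sum _ fun i _ => ?_
    exact ((measurable_pi_apply i).pow_const 2).const_mul _
  have hQ0 : ∀ ω, 0 ≤ Q ω := fun ω => Finset.sum_nonneg fun i _ => by positivity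
  have hQ1 : ∀ ω ∈ D, Q ω ≤ R ∧ Q (ω - v) ≤ R := by
    intro ω hω
    have hd : ∀ i, |ω i - c i| ≤ ρ := fun i => by
      have := (dist_le_pi_dist ω c i).trans (le_of_lt hω)
      rwa [Real.dist_eq] at this
    constructor
    · refine Finset.sum_le_sum fun i _ => mul_le_mul_of_nonneg_left ?_ (sq_nonneg _)
      have := abs_le.mp (hd i); have := hc0 i
      exact sq_le_sq' (by linarith) (by linarith)
    · refine Finset.sum_le_sum fun i _ => mul_le_mul_of_nonneg_left ?_ (sq_nonneg _)
      have h1 := abs_le.mp (hd i); have := hc0 i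
      have h2 := congrFun hcv i
      simp only [Pi.sub_apply, Pi.neg_apply] at h2 ⊢
      exact sq_le_sq' (by linarith) (by linarith)
  set a : ℝ := L / (2 * ((2 * π) ^ 2 * R)) / V with ha
  have ha0 : 0 ≤ a := by positivity
  set f : (Fin d → ℝ) → ℝ := D.indicator (fun _ => a) with hf
  have hfm : Measurable f := measurable_const.indicator hDm
  have hf0 : ∀ ω, 0 ≤ f ω := fun ω => Set.indicator_nonneg (fun _ _ => ha0) ω
  have hfi : Integrable f := by
    rw [hf, integrable_indicator_iff hDm]
    exact integrableOn_const hDtop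
  set F : (Fin d → ℝ) → ℝ := fun ω => f ω + f (ω + v) with hF
  have hF0 : ∀ ω, 0 ≤ F ω := fun ω => add_nonneg (hf0 _) (hf0 _)
  have hofF : ∀ ω, ENNReal.ofReal (F ω) = ENNReal.ofReal (f ω) + ENNReal.ofReal (f (ω + v)) :=
    fun ω => ENNReal.ofReal_add (hf0 _) (hf0 _)
  have hfm' : Measurable fun ω => ENNReal.ofReal (f ω) := hfm.ennreal_ofReal
  have swap : ∀ g : (Fin d → ℝ) → ENNReal, Measurable g →
      ∫⁻ ω, ENNReal.ofReal (F ω) * g ω = ∫⁻ ω, ENNReal.ofReal (f ω) * (g ω + g (ω - v)) := by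
    intro g hg
    simp only [hofF, add_mul, mul_add]
    have hm : Measurable fun ω => ENNReal.ofReal (f ω) * g ω := hfm'.mul hg
    rw [lintegral_add_left hm, lintegral_add_left hm]
    congr 1
    rw [← lintegral_sub_right_eq_self (fun ω => ENNReal.ofReal (f (ω + v)) * g ω) v]
    simp
  have hint : ∫⁻ ω, ENNReal.ofReal (f ω) = ENNReal.ofReal (L / (2 * ((2 * π) ^ 2 * R))) := by
    have : (fun ω => ENNReal.ofReal (f ω)) = D.indicator (fun _ => ENNReal.ofReal a) := by
      ext ω; by_cases hω : ω ∈ D <;> simp [hf, hω]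
    rw [this, lintegral_indicator_const hDm, ← ENNReal.ofReal_toReal hDtop,
      ← ENNReal.ofReal_mul ha0]
    congr 1
    exact div_mul_cancel₀ _ hVpos.ne'
  have hmem : F ∈ SpecClass d L lam := by
    refine ⟨hfm.add (hfm.comp (measurable_id.add_const v)), hfi.add (hfi.comp_add_right v), hF0, ?_⟩
    have : ∫⁻ ω, ENNReal.ofReal (F ω * ∑ i, (lam i) ^ 2 * (ω i) ^ 2)
        = ∫⁻ ω, ENNReal.ofReal (F ω) * ENNReal.ofReal (Q ω) :=
      lintegral_congr fun ω => ENNReal.ofReal_mul (hF0 ω)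
    rw [this, swap _ hQm.ennreal_ofReal]
    have h1 : ∫⁻ ω, ENNReal.ofReal (f ω) * (ENNReal.ofReal (Q ω) + ENNReal.ofReal (Q (ω - v)))
        ≤ ∫⁻ ω, ENNReal.ofReal (f ω) * ENNReal.ofReal (2 * R) := by
      refine lintegral_mono fun ω => ?_
      by_cases hω : ω ∈ D
      · refine mul_le_mul_right ?_ _
        rw [← ENNReal.ofReal_add (hQ0 _) (hQ0 _)]
        apply ENNReal.ofReal_le_ofReal
        have := hQ1 ω hω; linarith [this.1, this.2]
      · simp [hf, hω]
    refine (mul_le_mul_right h1 _).trans ?_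
    rw [lintegral_mul_const _ hfm', hint, ← ENNReal.ofReal_mul (by positivity),
      ← ENNReal.ofReal_mul (by positivity)]
    apply ENNReal.ofReal_le_ofReal
    apply le_of_eq
    have := Real.pi_ne_zero
    field_simp
  refine le_trans ?_ (le_iSup₂_of_le F hmem le_rfl)
  change _ ≤ ∫⁻ ω, ENNReal.ofReal (F ω) * GG h K ω
  rw [swap _ (GG_meas h K hK), ← hint]
  refine lintegral_mono fun ω => ?_
  exact le_mul_of_one_le_right' (GG_pair h K p ω)

/-- The minimax interpolation error over the smoothness class `𝓕(L, λ)` equals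
`(L/(2π²)) · maxᵢ (hᵢ/λᵢ)²`. -/
theorem minimax_interpolation_error (d : ℕ) (hd : 1 ≤ d) (h lam : Fin d → ℝ)
    (hh : ∀ i, 0 < h i) (hlam : ∀ i, 0 < lam i) (L : ℝ) (hL : 0 < L) :
    (⨅ K ∈ {K : (Fin d → ℝ) → ℝ | Measurable K},
        ⨆ F ∈ SpecClass d L lam, Phi d h F K)
      = ENNReal.ofReal (L / (2 * π ^ 2) * ⨆ i : Fin d, (h i / lam i) ^ 2) := by
  have : Nonempty (Fin d) := ⟨⟨0, hd⟩⟩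
  obtain ⟨p, hp⟩ := exists_eq_ciSup_of_finite (f := fun i : Fin d => (h i / lam i) ^ 2)
  apply le_antisymm
  · refine iInf₂_le_of_le (fun w => K0 (fun i => h i * w i)) ?_ ?_
    · exact K0_meas.comp (measurable_pi_lambda _ fun i => (measurable_pi_apply i).const_mul _)
    · refine iSup₂_le fun F hF => ?_
      exact upper d hd h lam hh hlam L hL _
        (fun i => le_ciSup (f := fun i : Fin d => (h i / lam i) ^ 2)
          (Set.finite_range _).bddAbove i) F hF
  · refine le_iInf₂ fun K hK => ?_
    rw [← hp]
    set R : ℝ → ℝ := fun ρ => L / (2 * ((2 * π) ^ 2 *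
      ∑ i, lam i ^ 2 * ((Pi.single p (1 / (2 * h p)) : Fin d → ℝ) i + ρ) ^ 2)) with hR
    have hpp := hh p
    have hlp := hlam p
    have hs : ∑ i, lam i ^ 2 * ((Pi.single p (1 / (2 * h p)) : Fin d → ℝ) i + 0) ^ 2
        = lam p ^ 2 * (1 / (2 * h p)) ^ 2 := by
      rw [Finset.sum_eq_single p]
      · simp
      · intro i _ hi; simp [hi]
      · simp
    have hR0 : R 0 = L / (2 * π ^ 2) * (h p / lam p) ^ 2 := by
      rw [hR]; dsimp only; rw [hs]
      have := Real.pi_ne_zero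
      field_simp
    have hcont : ContinuousAt R 0 := by
      refine ContinuousAt.div continuousAt_const (by fun_prop) ?_
      rw [hs]; positivity
    have ht : Filter.Tendsto (fun ρ => ENNReal.ofReal (R ρ)) (nhdsWithin 0 (Set.Ioi 0))
        (nhds (ENNReal.ofReal (R 0))) :=
      (ENNReal.continuous_ofReal.continuousAt.comp hcont).tendsto.mono_left nhdsWithin_le_nhds
    rw [← hR0]
    refine le_of_tendsto ht ?_
    filter_upwards [self_mem_nhdsWithin] with ρ hρ
    exact lower d h lam hh hlam L hL p K hK ρ hρ
end

section
/- Let d ≥ 1, let h_1,…,h_d > 0, λ_1,…,λ_d > 0 and L > 0. Define the kernel K̂*(ω) = 1 − √(∑_{i=1}^d ω_i² h_i²) if ∑_{i=1}^d ω_i² h_i² ≤ 1 and K̂*(ω) = 0 otherwise. Then for every F ∈ 𝓕(L, λ) one has Φ_H(F, K̂*) ≤ (L / (2π²)) · max_{i ∈ {1,…,d}} (h_i / λ_i)². -/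
open MeasureTheory Real

namespace OptKer

/-- Truncated kernel of a radius. -/
noncomputable def kap (r : ℝ) : ℝ := max 0 (1 - r)

/-- Slice factor. -/
noncomputable def cf (u : ℝ) : ℝ := max 0 ((1 - u ^ 2) / (1 + u ^ 2))

/-- Kernel in normalised coordinates. -/
noncomputable def ker {d : ℕ} (x : Fin d → ℝ) : ℝ := kap (Real.sqrt (∑ i, x i ^ 2))

lemma kap_nonneg (r : ℝ) : 0 ≤ kap r := le_max_left _ _
lemma cf_nonneg (r : ℝ) : 0 ≤ cf r := le_max_left _ _

lemma kap_slice (t s : ℝ) (hs : 0 ≤ s) :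
    kap (Real.sqrt (t ^ 2 + s)) ≤ cf t * kap (Real.sqrt s) := by
  have hr := Real.sqrt_nonneg s
  have hsq := Real.sq_sqrt hs
  have hR := Real.sqrt_nonneg (t ^ 2 + s)
  have hRsq := Real.sq_sqrt (show 0 ≤ t ^ 2 + s by positivity)
  set r := Real.sqrt s
  set R := Real.sqrt (t ^ 2 + s)
  have hnn := mul_nonneg (cf_nonneg t) (kap_nonneg r)
  by_cases h1 : 1 ≤ R
  · have : kap R = 0 := max_eq_left (by linarith)
    rw [this]; exact hnn
  push Not at h1
  have hR1 : R ^ 2 < 1 := by nlinarith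
  have hr1 : r < 1 := by nlinarith [sq_nonneg t]
  have ht1 : t ^ 2 < 1 := by nlinarith
  have e1 : kap R = 1 - R := max_eq_right (by linarith)
  have e2 : kap r = 1 - r := max_eq_right (by linarith)
  have e3 : cf t = (1 - t ^ 2) / (1 + t ^ 2) :=
    max_eq_right (div_nonneg (by linarith) (by positivity))
  rw [e1, e2, e3, div_mul_eq_mul_div, le_div_iff₀ (by positivity)]
  have hq : 0 ≤ t ^ 2 := sq_nonneg t
  have key : 2 * t ^ 2 + (1 - t ^ 2) * r ≤ (1 + t ^ 2) * R := by
    apply le_of_sq_le_sq _ (by positivity)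
    have : ((1 + t ^ 2) * R) ^ 2 - (2 * t ^ 2 + (1 - t ^ 2) * r) ^ 2
        = t ^ 2 * ((1 - t ^ 2) - 2 * r) ^ 2 := by
      rw [mul_pow, hRsq, ← hsq]; ring
    nlinarith [mul_nonneg hq (sq_nonneg ((1 - t ^ 2) - 2 * r))]
  nlinarith

lemma kap_sum_le (t s : ℝ) (hs : 0 ≤ s) : kap (Real.sqrt (t ^ 2 + s)) ≤ kap |t| := by
  unfold kap
  have : |t| ≤ Real.sqrt (t ^ 2 + s) := Real.abs_le_sqrt (by linarith)
  exact max_le_max le_rfl (by linarith)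

lemma cf_pair (s : ℝ) (h0 : 0 ≤ s) (h1 : s ≤ 1) : cf s ^ 2 + cf (s - 1) ^ 2 ≤ 1 := by
  have e1 : cf s = (1 - s ^ 2) / (1 + s ^ 2) :=
    max_eq_right (div_nonneg (by nlinarith) (by positivity))
  have e2 : cf (s - 1) = (1 - (s - 1) ^ 2) / (1 + (s - 1) ^ 2) :=
    max_eq_right (div_nonneg (by nlinarith) (by positivity))
  have h3 : cf (s - 1) ≤ 2 * s / (1 + s ^ 2) := by
    rw [e2, div_le_div_iff₀ (by positivity) (by positivity)]
    have : 0 ≤ s * ((1 - s) ^ 2 * (s + 2)) := by positivity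
    nlinarith
  have h4 : cf (s - 1) ^ 2 ≤ (2 * s / (1 + s ^ 2)) ^ 2 := pow_le_pow_left₀ (cf_nonneg _) h3 2
  have h5 : cf s ^ 2 + (2 * s / (1 + s ^ 2)) ^ 2 = 1 := by
    rw [e1]; field_simp; ring
  linarith

lemma cf_zero (u : ℝ) (h : 1 ≤ |u|) : cf u = 0 := by
  apply max_eq_left
  apply div_nonpos_of_nonpos_of_nonneg _ (by positivity)
  nlinarith [sq_abs u]

lemma kap_zero (u : ℝ) (h : 1 ≤ u) : kap u = 0 := max_eq_left (by linarith)

/-- Sum over the integers of a function supported in the unit interval around zero. -/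
lemma tsum_int (f : ℝ → ℝ) (hf : ∀ u, 1 ≤ |u| → f u = 0) (g : ℤ → ENNReal) (t : ℝ)
    (hg : ∀ n, g n ≤ ENNReal.ofReal (f (t + n))) :
    ∑' n : ℤ, g n = g (-⌊t⌋) + g (-⌊t⌋ - 1) := by
  rw [tsum_eq_sum (s := {-⌊t⌋, -⌊t⌋ - 1}), Finset.sum_pair (by omega)]
  intro n hn
  simp only [Finset.mem_insert, Finset.mem_singleton, not_or] at hn
  have := hg n
  rw [hf, ENNReal.ofReal_zero] at this
  · exact le_antisymm this bot_le
  have a1 := Int.floor_le t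
  have a2 := Int.lt_floor_add_one t
  rcases lt_or_gt_of_ne hn.1 with h | h
  · have : n ≤ -⌊t⌋ - 2 := by omega
    have : (n : ℝ) ≤ -⌊t⌋ - 2 := by exact_mod_cast this
    rw [le_abs]; right; linarith
  · have : -⌊t⌋ + 1 ≤ n := by omega
    have : -(⌊t⌋ : ℝ) + 1 ≤ n := by exact_mod_cast this
    rw [le_abs]; left; linarith

lemma cf_tsum (t : ℝ) : ∑' n : ℤ, ENNReal.ofReal (cf (t + n) ^ 2) ≤ 1 := by
  rw [tsum_int (fun u => cf u ^ 2) (fun u hu => by simp [cf_zero u hu]) _ t (fun n => le_rfl),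
    ← ENNReal.ofReal_add (by positivity) (by positivity), ← ENNReal.ofReal_one]
  apply ENNReal.ofReal_le_ofReal
  have a1 := Int.floor_le t
  have a2 := Int.lt_floor_add_one t
  have := cf_pair (t - ⌊t⌋) (by linarith) (by linarith)
  push_cast
  have q1 : t + -(⌊t⌋ : ℝ) = t - ⌊t⌋ := by ring
  have q2 : t + (-(⌊t⌋ : ℝ) - 1) = t - ⌊t⌋ - 1 := by ring
  rw [q1, q2]; exact this

lemma kap_tsum (t : ℝ) :
    ∑' n : ℤ, (if n = 0 then 0 else ENNReal.ofReal (kap |t + n| ^ 2)) ≤ ENNReal.ofReal (t ^ 2) := by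
  rw [tsum_int (fun u => kap |u| ^ 2) (fun u hu => by simp [kap_zero _ hu]) _ t
    (fun n => by split_ifs <;> simp)]
  have a1 := Int.floor_le t
  have a2 := Int.lt_floor_add_one t
  have e1 : kap |t + ((-⌊t⌋ : ℤ) : ℝ)| = 1 - (t - ⌊t⌋) := by
    push_cast
    rw [abs_of_nonneg (by linarith)]
    unfold kap; rw [max_eq_right (by linarith)]; ring
  have e2 : kap |t + ((-⌊t⌋ - 1 : ℤ) : ℝ)| = t - ⌊t⌋ := by
    push_cast
    rw [abs_of_nonpos (by linarith)]
    unfold kap; rw [max_eq_right (by linarith)]; ring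
  rw [e1, e2]
  by_cases h0 : ⌊t⌋ = 0
  · simp [h0]
  by_cases h1 : ⌊t⌋ = -1
  · simp only [h1]; norm_num
  rw [if_neg (by omega), if_neg (by omega),
    ← ENNReal.ofReal_add (by positivity) (by positivity)]
  apply ENNReal.ofReal_le_ofReal
  have ht : 1 ≤ t ^ 2 := by
    rcases lt_or_gt_of_ne h0 with h | h
    · have : ⌊t⌋ ≤ -2 := by omega
      have : (⌊t⌋ : ℝ) ≤ -2 := by exact_mod_cast this
      nlinarith
    · have : 1 ≤ ⌊t⌋ := by omega
      have : (1 : ℝ) ≤ ⌊t⌋ := by exact_mod_cast this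
      nlinarith
  nlinarith

lemma main_sum (d : ℕ) : ∀ x : Fin d → ℝ,
    ∑' k : Fin d → ℤ, (if k = 0 then 0 else
      ENNReal.ofReal (ker (fun i => x i + k i) ^ 2)) ≤ ENNReal.ofReal (∑ i, x i ^ 2) := by
  induction d with
  | zero =>
    intro x
    have : ∀ k : Fin 0 → ℤ, k = 0 := fun k => Subsingleton.elim _ _
    rw [ENNReal.tsum_eq_zero.mpr (fun k => if_pos (this k))]
    exact bot_le
  | succ d ih =>
    intro x
    set t := x 0
    set y : Fin d → ℝ := fun i => x i.succ
    rw [← (Fin.consEquiv (fun _ : Fin (d+1) => ℤ)).tsum_eq, ENNReal.summable.tsum_prod' (fun _ => ENNReal.summable)]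
    have step : ∀ (n : ℤ) (k : Fin d → ℤ),
        (if (Fin.consEquiv (fun _ : Fin (d+1) => ℤ)) (n, k) = 0 then 0 else
          ENNReal.ofReal (ker (fun i => x i +
            ((Fin.consEquiv (fun _ : Fin (d+1) => ℤ)) (n, k) i : ℤ)) ^ 2)) ≤
        (if k = 0 then (if n = 0 then 0 else ENNReal.ofReal (kap |t + n| ^ 2)) else 0) +
        ENNReal.ofReal (cf (t + n) ^ 2) *
          (if k = 0 then 0 else ENNReal.ofReal (ker (fun i => y i + k i) ^ 2)) := by
      intro n k
      have hker : ker (fun i => x i + ((Fin.consEquiv (fun _ : Fin (d+1) => ℤ)) (n, k) i : ℤ))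
          = kap (Real.sqrt ((t + n) ^ 2 + ∑ i, (y i + k i) ^ 2)) := by
        simp [ker, Fin.consEquiv, Fin.sum_univ_succ, t, y]
      rw [hker]
      have hs : 0 ≤ ∑ i, (y i + k i) ^ 2 := Finset.sum_nonneg (fun i _ => sq_nonneg _)
      by_cases hk : k = 0
      · by_cases hn : n = 0
        · have : (Fin.consEquiv (fun _ : Fin (d+1) => ℤ)) (n, k) = 0 := by
            subst hk hn
            funext i
            refine Fin.cases ?_ ?_ i <;> simp [Fin.consEquiv]
          simp [this]
        · simp only [hk, hn, if_true, if_false, mul_zero, add_zero]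
          split_ifs
          · exact bot_le
          · subst hk
            exact ENNReal.ofReal_le_ofReal
              (pow_le_pow_left₀ (kap_nonneg _) (kap_sum_le _ _ hs) 2)
      · simp only [hk, if_false, zero_add]
        split_ifs
        · exact bot_le
        · rw [← ENNReal.ofReal_mul (by positivity), ← mul_pow]
          exact ENNReal.ofReal_le_ofReal
              (pow_le_pow_left₀ (kap_nonneg _) (kap_slice _ _ hs) 2)
    calc _ ≤ ∑' (n : ℤ) (k : Fin d → ℤ), _ :=
          ENNReal.tsum_le_tsum fun n => ENNReal.tsum_le_tsum fun k => step n k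
      _ = ∑' n : ℤ, ((if n = 0 then 0 else ENNReal.ofReal (kap |t + n| ^ 2)) +
            ENNReal.ofReal (cf (t + n) ^ 2) * ∑' k : Fin d → ℤ,
              (if k = 0 then 0 else ENNReal.ofReal (ker (fun i => y i + k i) ^ 2))) := by
          congr 1; funext n
          rw [ENNReal.tsum_add, ENNReal.tsum_mul_left, tsum_ite_eq]
      _ ≤ ENNReal.ofReal (t ^ 2) + 1 * ENNReal.ofReal (∑ i, y i ^ 2) := by
          rw [ENNReal.tsum_add, ENNReal.tsum_mul_right]
          exact add_le_add (kap_tsum t) (mul_le_mul' (cf_tsum t) (ih y))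
      _ = _ := by
          rw [one_mul, ← ENNReal.ofReal_add (by positivity)
            (Finset.sum_nonneg (fun i _ => sq_nonneg _)), Fin.sum_univ_succ]

lemma pointwise (d : ℕ) (x : Fin d → ℝ) :
    ENNReal.ofReal ((1 - ker x) ^ 2) + ∑' k : {k : Fin d → ℤ // k ≠ 0},
      ENNReal.ofReal (ker (fun i => x i + k.1 i) ^ 2) ≤ ENNReal.ofReal (2 * ∑ i, x i ^ 2) := by
  have hs : 0 ≤ ∑ i, x i ^ 2 := Finset.sum_nonneg (fun i _ => sq_nonneg _)
  have h1 : (1 - ker x) ^ 2 ≤ ∑ i, x i ^ 2 := by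
    conv_rhs => rw [← Real.sq_sqrt hs]
    have h2 := Real.sqrt_nonneg (∑ i, x i ^ 2)
    apply pow_le_pow_left₀
    · unfold ker kap
      rw [sub_nonneg]; exact max_le zero_le_one (by linarith)
    · unfold ker kap
      have := le_max_right 0 (1 - Real.sqrt (∑ i, x i ^ 2))
      linarith
  have h2 := main_sum d x
  have h3 : ∑' k : {k : Fin d → ℤ // k ≠ 0}, ENNReal.ofReal (ker (fun i => x i + k.1 i) ^ 2)
      = ∑' k : Fin d → ℤ, (if k = 0 then 0 else
      ENNReal.ofReal (ker (fun i => x i + k i) ^ 2)) := by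
    refine (tsum_subtype {k : Fin d → ℤ | k ≠ 0}
      (fun k => ENNReal.ofReal (ker (fun i => x i + k i) ^ 2))).trans ?_
    congr 1; funext k
    by_cases hk : k = 0 <;> simp [hk]
  rw [h3, two_mul, ENNReal.ofReal_add hs hs]
  exact add_le_add (ENNReal.ofReal_le_ofReal h1) h2

end OptKer


open MeasureTheory Real

/-- With the minimax-optimal kernel
`K̂*(ω) = 1 − √(∑ᵢ ωᵢ² hᵢ²)` for `∑ᵢ ωᵢ² hᵢ² ≤ 1` and `0` otherwise,
the interpolation error is at most `(L/(2π²)) · maxᵢ (hᵢ/λᵢ)²` for every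
spectral density `F` in the smoothness class `𝓕(L, λ)`. -/
theorem optimal_kernel_upper_bound (d : ℕ) (hd : 1 ≤ d) (h lam : Fin d → ℝ)
    (hh : ∀ i, 0 < h i) (hlam : ∀ i, 0 < lam i) (L : ℝ) (hL : 0 < L)
    (Kstar : (Fin d → ℝ) → ℝ)
    (hKstar : ∀ ω : Fin d → ℝ, Kstar ω =
      if (∑ i, (ω i) ^ 2 * (h i) ^ 2) ≤ 1
        then 1 - Real.sqrt (∑ i, (ω i) ^ 2 * (h i) ^ 2) else 0) :
    ∀ F ∈ SpecClass d L lam,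
      Phi d h F Kstar ≤ ENNReal.ofReal (L / (2 * π ^ 2) * ⨆ i : Fin d, (h i / lam i) ^ 2) := by
  intro F hF
  obtain ⟨-, -, hF0, hFL⟩ := hF
  set M := ⨆ i : Fin d, (h i / lam i) ^ 2 with hM
  have hMi : ∀ i, (h i / lam i) ^ 2 ≤ M := fun i =>
    le_ciSup (f := fun i => (h i / lam i) ^ 2) (Set.finite_range _).bddAbove i
  have hM0 : 0 ≤ M := (sq_nonneg _).trans (hMi ⟨0, hd⟩)
  have hK : ∀ ω, Kstar ω = OptKer.ker (fun i => h i * ω i) := by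
    intro ω
    have e : ∑ i, (h i * ω i) ^ 2 = ∑ i, (ω i) ^ 2 * (h i) ^ 2 :=
      Finset.sum_congr rfl fun i _ => by ring
    rw [hKstar, OptKer.ker, OptKer.kap, e]
    split_ifs with hc
    · rw [max_eq_right]
      have := Real.sqrt_le_one.mpr hc
      linarith
    · rw [max_eq_left]
      have := Real.one_le_sqrt.mpr (not_le.mp hc).le
      linarith
  have hpt : ∀ ω : Fin d → ℝ, ENNReal.ofReal (F ω) *
      (ENNReal.ofReal ((1 - Kstar ω) ^ 2) + ∑' k : {k : Fin d → ℤ // k ≠ 0},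
        ENNReal.ofReal ((Kstar (ω + fun i => (k.1 i : ℝ) / h i)) ^ 2)) ≤
      ENNReal.ofReal (2 * M) * ENNReal.ofReal (F ω * ∑ i, (lam i) ^ 2 * (ω i) ^ 2) := by
    intro ω
    have hp := OptKer.pointwise d (fun i => h i * ω i)
    have e : ∀ k : Fin d → ℤ, Kstar (ω + fun i => (k i : ℝ) / h i) =
        OptKer.ker (fun i => h i * ω i + k i) := by
      intro k
      rw [hK]; congr 1; funext i
      have := (hh i).ne'
      simp only [Pi.add_apply]; field_simp
    simp only [e, hK ω]
    refine (mul_le_mul_right hp _).trans ?_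
    rw [← ENNReal.ofReal_mul (hF0 ω), ← ENNReal.ofReal_mul (by positivity)]
    apply ENNReal.ofReal_le_ofReal
    have hsum : ∑ i, (h i * ω i) ^ 2 ≤ M * ∑ i, (lam i) ^ 2 * (ω i) ^ 2 := by
      rw [Finset.mul_sum]
      apply Finset.sum_le_sum
      intro i _
      have h1 := mul_le_mul_of_nonneg_right (hMi i)
        (show 0 ≤ (lam i) ^ 2 * (ω i) ^ 2 by positivity)
      have h2 : (h i / lam i) ^ 2 * ((lam i) ^ 2 * (ω i) ^ 2) = (h i * ω i) ^ 2 := by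
        have := (hlam i).ne'
        field_simp
      linarith
    have := mul_le_mul_of_nonneg_left hsum (hF0 ω)
    linarith
  have hpi := Real.pi_pos
  set I := ∫⁻ ω : Fin d → ℝ, ENNReal.ofReal (F ω * ∑ i, (lam i) ^ 2 * (ω i) ^ 2) with hI
  calc Phi d h F Kstar ≤ ∫⁻ ω : Fin d → ℝ, ENNReal.ofReal (2 * M) *
        ENNReal.ofReal (F ω * ∑ i, (lam i) ^ 2 * (ω i) ^ 2) := lintegral_mono hpt
    _ = ENNReal.ofReal (2 * M) * I := lintegral_const_mul' _ _ ENNReal.ofReal_ne_top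
    _ = ENNReal.ofReal (2 * M / (2 * π) ^ 2) * (ENNReal.ofReal ((2 * π) ^ 2) * I) := by
        rw [← mul_assoc, ← ENNReal.ofReal_mul (by positivity),
          div_mul_cancel₀ _ (by positivity)]
    _ ≤ ENNReal.ofReal (2 * M / (2 * π) ^ 2) * ENNReal.ofReal L := mul_le_mul_right hFL _
    _ = ENNReal.ofReal (L / (2 * π ^ 2) * M) := by
        rw [← ENNReal.ofReal_mul (by positivity)]
        congr 1; field_simp; try ring
end

section
/- Let d ≥ 1, let h_1,…,h_d > 0, λ_1,…,λ_d > 0 and L > 0. Then for every measurable kernel K̂ : ℝ^d → ℝ, the supremum over F ∈ 𝓕(L, λ) of Φ_H(F, K̂) is at least (L / (2π²)) · max_{i ∈ {1,…,d}} (h_i / λ_i)². -/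
open MeasureTheory Real


lemma aux_eps (d : ℕ) (h lam : Fin d → ℝ)
    (hh : ∀ i, 0 < h i) (L : ℝ) (hL : 0 < L)
    (K : (Fin d → ℝ) → ℝ) (hK : Measurable K) (i : Fin d) (r : ℝ)
    (hr : lam i ^ 2 * (1 / (2 * h i)) ^ 2 < r) :
    ENNReal.ofReal (L / (8 * π ^ 2 * r)) ≤ ⨆ F ∈ SpecClass d L lam, Phi d h F K := by
  have hr0 : 0 < r := lt_of_le_of_lt (by positivity) hr
  set Q : (Fin d → ℝ) → ℝ := fun ω => ∑ j, (lam j) ^ 2 * (ω j) ^ 2 with hQ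
  have hQc : Continuous Q := by fun_prop
  set p : Fin d → ℝ := Pi.single i (1 / (2 * h i)) with hp
  have hQp : Q p = lam i ^ 2 * (1 / (2 * h i)) ^ 2 := by
    simp only [hQ, hp]
    rw [Finset.sum_eq_single i]
    · simp
    · intro j _ hj
      simp [hj]
    · simp
  have hQn : ∀ ω, Q (-ω) = Q ω := by intro ω; simp [hQ]
  have hev : ∀ᶠ ω in nhds p, Q ω < r :=
    hQc.continuousAt.eventually (gt_mem_nhds (by rw [hQp]; exact hr))
  obtain ⟨δ, hδ, hball⟩ := Metric.eventually_nhds_iff_ball.1 hev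
  set A := Metric.ball p δ with hA
  have hAm : MeasurableSet A := Metric.isOpen_ball.measurableSet
  have hAtop : volume A ≠ ⊤ := measure_ball_lt_top.ne
  have hApos : volume A ≠ 0 := (Metric.measure_ball_pos volume p hδ).ne'
  set V := (volume A).toReal with hV
  have hVpos : 0 < V := ENNReal.toReal_pos hApos hAtop
  set c : ℝ := L / (8 * π ^ 2 * r) / V with hc
  have hc0 : 0 < c := by positivity
  set φ : (Fin d → ℝ) → ℝ := A.indicator (fun _ => c) with hφ
  have hφ0 : ∀ ω, 0 ≤ φ ω := fun ω => Set.indicator_nonneg (fun _ _ => hc0.le) ω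
  have hφm : Measurable φ := measurable_const.indicator hAm
  have hφi : Integrable φ := (integrable_indicator_iff hAm).2 (integrableOn_const hAtop)
  set v : Fin d → ℝ := p + p with hv
  have hI : ∫⁻ ω, ENNReal.ofReal (φ ω) = ENNReal.ofReal (L / (8 * π ^ 2 * r)) := by
    have : ∀ ω, ENNReal.ofReal (φ ω) = A.indicator (fun _ => ENNReal.ofReal c) ω := by
      intro ω
      by_cases hω : ω ∈ A <;> simp [hφ, hω]
    simp_rw [this]
    rw [lintegral_indicator_const hAm, ← ENNReal.ofReal_toReal hAtop,
      ← ENNReal.ofReal_mul hc0.le]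
    congr 1
    rw [hc]
    field_simp
    rfl
  have hφQ : ∀ ω, φ ω * Q ω ≤ φ ω * r := by
    intro ω
    by_cases hω : ω ∈ A
    · exact mul_le_mul_of_nonneg_left (hball ω hω).le (hφ0 ω)
    · simp [hφ, hω]
  have hφQ' : ∀ ω, φ (ω + v) * Q ω ≤ φ (ω + v) * r := by
    intro ω
    by_cases hω : ω + v ∈ A
    · refine mul_le_mul_of_nonneg_left ?_ (hφ0 _)
      rw [← hQn]
      refine (hball (-ω) ?_).le
      rw [hA, mem_ball_iff_norm] at hω
      have e : -ω - p = -(ω + v - p) := by rw [hv]; abel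
      rw [mem_ball_iff_norm, e, norm_neg]
      exact hω
    · simp [hφ, hω]
  set F : (Fin d → ℝ) → ℝ := fun ω => φ ω + φ (ω + v) with hF
  have hFmem : F ∈ SpecClass d L lam := by
    refine ⟨hφm.add (hφm.comp (measurable_add_const v)),
      hφi.add (hφi.comp_add_right v), fun ω => add_nonneg (hφ0 _) (hφ0 _), ?_⟩
    have h1 : ∫⁻ ω : Fin d → ℝ, ENNReal.ofReal (F ω * Q ω)
        ≤ ∫⁻ ω, (ENNReal.ofReal (φ ω) + ENNReal.ofReal (φ (ω + v))) * ENNReal.ofReal r := by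
      refine lintegral_mono fun ω => ?_
      show ENNReal.ofReal (F ω * Q ω) ≤ _
      rw [← ENNReal.ofReal_add (hφ0 _) (hφ0 _), ← ENNReal.ofReal_mul (add_nonneg (hφ0 _) (hφ0 _))]
      refine ENNReal.ofReal_le_ofReal ?_
      have := hφQ ω
      have := hφQ' ω
      simp only [hF]
      linarith
    rw [lintegral_mul_const' _ _ ENNReal.ofReal_ne_top, lintegral_add_left hφm.ennreal_ofReal,
      lintegral_add_right_eq_self (fun ω => ENNReal.ofReal (φ ω)) v, hI,
      ← ENNReal.ofReal_add (by positivity) (by positivity),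
      ← ENNReal.ofReal_mul (by positivity)] at h1
    refine (mul_le_mul_right h1 _).trans ?_
    rw [← ENNReal.ofReal_mul (by positivity)]
    refine ENNReal.ofReal_le_ofReal (le_of_eq ?_)
    field_simp
    ring
  refine le_trans ?_ (le_iSup₂ (f := fun F _ => Phi d h F K) F hFmem)
  have hvi : ∀ n : ℤ, (fun j => ((Pi.single i n : Fin d → ℤ) j : ℝ) / h j) = (n : ℝ) • v := by
    intro n
    ext j
    by_cases hj : j = i
    · subst hj
      have := (hh j).ne'
      simp [hv, hp]
      field_simp
      norm_num
    · simp [hv, hp, hj]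
  set G : (Fin d → ℝ) → ENNReal := fun ω => ENNReal.ofReal ((1 - K ω) ^ 2) +
      ∑' k : {k : Fin d → ℤ // k ≠ 0},
        ENNReal.ofReal ((K (ω + fun i => (k.1 i : ℝ) / h i)) ^ 2) with hG
  have hGle : ∀ (n : ℤ), n ≠ 0 → ∀ ω, ENNReal.ofReal ((1 - K ω) ^ 2) +
      ENNReal.ofReal ((K (ω + (n : ℝ) • v)) ^ 2) ≤ G ω := by
    intro n hn ω
    simp only [hG]
    refine add_le_add_right ?_ _
    rw [← hvi n]
    exact ENNReal.le_tsum (f := fun k : {k : Fin d → ℤ // k ≠ 0} =>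
        ENNReal.ofReal ((K (ω + fun i => (k.1 i : ℝ) / h i)) ^ 2))
        (⟨Pi.single i n, by simpa using hn⟩ : {k : Fin d → ℤ // k ≠ 0})
  set G1 : (Fin d → ℝ) → ENNReal := fun ω => ENNReal.ofReal ((1 - K ω) ^ 2) +
      ENNReal.ofReal ((K (ω + -v)) ^ 2) with hG1
  have hG1m : Measurable G1 := by
    simp only [hG1]
    fun_prop
  calc ENNReal.ofReal (L / (8 * π ^ 2 * r)) = ∫⁻ ω, ENNReal.ofReal (φ ω) := hI.symm
    _ ≤ ∫⁻ ω, (ENNReal.ofReal (φ ω) * G1 ω + ENNReal.ofReal (φ ω) * G (ω + -v)) := by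
        refine lintegral_mono fun ω => ?_
        show ENNReal.ofReal (φ ω) ≤ _
        rw [← mul_add]
        conv_lhs => rw [← mul_one (ENNReal.ofReal (φ ω))]
        refine mul_le_mul_right ?_ _
        have h2 := hGle 1 one_ne_zero (ω + -v)
        refine le_trans ?_ (add_le_add_right h2 _)
        simp only [hG1, Int.cast_one, one_smul, neg_add_cancel_right]
        rw [← ENNReal.ofReal_add (by positivity) (by positivity),
          ← ENNReal.ofReal_add (by positivity) (by positivity),
          ← ENNReal.ofReal_add (by positivity) (by positivity), ← ENNReal.ofReal_one]
        refine ENNReal.ofReal_le_ofReal ?_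
        nlinarith [sq_nonneg (2 * K ω - 1), sq_nonneg (2 * K (ω + -v) - 1)]
    _ = (∫⁻ ω, ENNReal.ofReal (φ ω) * G1 ω) + ∫⁻ ω, ENNReal.ofReal (φ ω) * G (ω + -v) :=
        lintegral_add_left (hφm.ennreal_ofReal.mul hG1m) _
    _ = (∫⁻ ω, ENNReal.ofReal (φ ω) * G1 ω) + ∫⁻ ω, ENNReal.ofReal (φ (ω + v)) * G ω := by
        congr 1
        rw [← lintegral_add_right_eq_self (fun ω => ENNReal.ofReal (φ ω) * G (ω + -v)) v]
        simp
    _ ≤ (∫⁻ ω, ENNReal.ofReal (φ ω) * G ω) + ∫⁻ ω, ENNReal.ofReal (φ (ω + v)) * G ω := by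
        refine add_le_add_left (lintegral_mono fun ω => mul_le_mul_right ?_ _) _
        have := hGle (-1) (by norm_num) ω
        simpa [hG1] using this
    _ ≤ ∫⁻ ω, (ENNReal.ofReal (φ ω) * G ω + ENNReal.ofReal (φ (ω + v)) * G ω) :=
        le_lintegral_add _ _
    _ = Phi d h F K := by
        unfold Phi
        refine lintegral_congr fun ω => ?_
        rw [← add_mul, ← ENNReal.ofReal_add (hφ0 _) (hφ0 _)]

/-- For every measurable kernel `K̂`, the worst-case interpolation error over the
smoothness class `𝓕(L, λ)` is at least `(L/(2π²)) · maxᵢ (hᵢ/λᵢ)²`. -/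
theorem minimax_lower_bound (d : ℕ) (hd : 1 ≤ d) (h lam : Fin d → ℝ)
    (hh : ∀ i, 0 < h i) (hlam : ∀ i, 0 < lam i) (L : ℝ) (hL : 0 < L)
    (K : (Fin d → ℝ) → ℝ) (hK : Measurable K) :
    ENNReal.ofReal (L / (2 * π ^ 2) * ⨆ i : Fin d, (h i / lam i) ^ 2)
      ≤ ⨆ F ∈ SpecClass d L lam, Phi d h F K := by
  have : Nonempty (Fin d) := ⟨⟨0, hd⟩⟩
  obtain ⟨i, hi⟩ := exists_eq_ciSup_of_finite (f := fun i : Fin d => (h i / lam i) ^ 2)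
  rw [← hi]
  have hli := hlam i
  have hhi := hh i
  set q := lam i ^ 2 * (1 / (2 * h i)) ^ 2 with hq
  have hq0 : 0 < q := by positivity
  have e : L / (2 * π ^ 2) * (h i / lam i) ^ 2 = L / (8 * π ^ 2 * q) := by
    rw [hq]
    field_simp
    norm_num
  show ENNReal.ofReal (L / (2 * π ^ 2) * (h i / lam i) ^ 2) ≤ _
  rw [e]
  have ht : Filter.Tendsto (fun r : ℝ => ENNReal.ofReal (L / (8 * π ^ 2 * r)))
      (nhdsWithin q (Set.Ioi q)) (nhds (ENNReal.ofReal (L / (8 * π ^ 2 * q)))) := by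
    refine ENNReal.tendsto_ofReal (Filter.Tendsto.mono_left ?_ nhdsWithin_le_nhds)
    have : ContinuousAt (fun r : ℝ => L / (8 * π ^ 2 * r)) q := by
      refine ContinuousAt.div (by fun_prop) (by fun_prop) (by positivity)
    exact this
  refine le_of_tendsto ht ?_
  filter_upwards [self_mem_nhdsWithin] with r hr
  exact aux_eps d h lam hh L hL K hK i r hr
end

section
/- Let c ≥ 0 and ω ≥ 0 be real numbers such that c² + ω² ≤ 1 and c² + (1 − ω)² ≤ 1. Then (1 − √(c² + ω²))² + (1 − √(c² + (1 − ω)²))² ≤ (1 − c)². -/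
/-- one-variable polynomial inequality -/
theorem aux_poly (u : ℝ) (h1 : 1 ≤ u) (h2 : u ≤ 187/100) :
    4 * (u - 1) ≤ u * ((u^2/3 - 161/1000) * (3 - (u^2/3 - 161/1000))) := by
  rcases le_total u (13/10) with h | h
  · nlinarith [mul_nonneg (sub_nonneg.2 h1) (sub_nonneg.2 h), mul_nonneg (mul_nonneg (sub_nonneg.2 h1) (sub_nonneg.2 h)) (sub_nonneg.2 h1), mul_nonneg (mul_nonneg (sub_nonneg.2 h1) (sub_nonneg.2 h)) (sq_nonneg u), mul_nonneg (mul_nonneg (sub_nonneg.2 h1) (sub_nonneg.2 h)) (pow_nonneg (zero_le_one.trans h1) 3)]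
  rcases le_total u (16/10) with h' | h'
  · nlinarith [mul_nonneg (sub_nonneg.2 h) (sub_nonneg.2 h'), mul_nonneg (mul_nonneg (sub_nonneg.2 h) (sub_nonneg.2 h')) (sub_nonneg.2 h1), mul_nonneg (mul_nonneg (sub_nonneg.2 h) (sub_nonneg.2 h')) (sq_nonneg u), mul_nonneg (mul_nonneg (sub_nonneg.2 h) (sub_nonneg.2 h')) (pow_nonneg (zero_le_one.trans h1) 3), sq_nonneg (u - 29/20), mul_nonneg (zero_le_one.trans h1) (sq_nonneg (u - 29/20))]
  · nlinarith [mul_nonneg (sub_nonneg.2 h') (sub_nonneg.2 h2), mul_nonneg (mul_nonneg (sub_nonneg.2 h') (sub_nonneg.2 h2)) (sub_nonneg.2 h1), mul_nonneg (mul_nonneg (sub_nonneg.2 h') (sub_nonneg.2 h2)) (sq_nonneg u), mul_nonneg (mul_nonneg (sub_nonneg.2 h') (sub_nonneg.2 h2)) (pow_nonneg (zero_le_one.trans h1) 3)]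

set_option maxHeartbeats 1000000 in
/-- the case `ω ≤ 1/2` with the square roots named -/
theorem aux_half (c w a b : ℝ) (hc : 0 ≤ c) (hw : 0 ≤ w) (hw2 : w ≤ 1/2)
    (ha : 0 ≤ a) (hb : 0 ≤ b) (ha2 : a^2 = c^2 + w^2) (hb2 : b^2 = c^2 + (1-w)^2)
    (h2 : c^2 + (1-w)^2 ≤ 1) : (1-a)^2 + (1-b)^2 ≤ (1-c)^2 := by
  rcases hw.eq_or_lt with rfl | hw
  · have : c = 0 := by nlinarith
    subst this
    have : a = 0 := by nlinarith
    have : b = 1 := by nlinarith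
    subst_vars; norm_num
  have hb1 : b ≤ 1 := by nlinarith
  have hac : c ≤ a := by nlinarith
  have hwa : w ≤ a := by nlinarith
  have hbk : 1 - w ≤ b := by nlinarith
  have hk : 0 < 2 - w := by linarith
  obtain ⟨z, hz⟩ : ∃ z, z = c^2 / (w * (2 - w)) := ⟨_, rfl⟩
  have hzc : c^2 = z * (w * (2 - w)) := by rw [hz]; field_simp
  have hz0 : 0 ≤ z := by rw [hz]; positivity
  have hz1 : z ≤ 1 := by rw [hz, div_le_one (by positivity)]; nlinarith
  -- lower bound for b
  have hbb : 2 * b ≥ 2 - 2 * w + 2 * w * z + w^2 * z * (1 - z) / 2 := by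
    have hq : 0 ≤ 1 - w + w * z + w^2 * z * (1 - z) / 4 := by
      have := mul_nonneg hw.le hz0
      have := mul_nonneg (mul_nonneg (sq_nonneg w) hz0) (sub_nonneg.2 hz1)
      linarith
    have : 1 - w + w * z + w^2 * z * (1 - z) / 4 ≤ b := by
      refine (sq_le_sq₀ hq hb).1 ?_
      rw [hb2, hzc]
      have e : z * (w * (2 - w)) + (1-w)^2 - (1 - w + w * z + w^2 * z * (1 - z) / 4)^2
        = w^2 * (z * (1-z)) * (1 - (1 - w + w*z)/2 - w^2 * (z*(1-z)) / 16) := by ring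
      have p : 0 ≤ z * (1-z) := mul_nonneg hz0 (sub_nonneg.2 hz1)
      have p1 : z * (1-z) ≤ 1 := by nlinarith
      have p2 : w^2 * (z*(1-z)) ≤ 1 := by nlinarith
      have p3 : w * z ≤ w := by nlinarith
      have := mul_nonneg (mul_nonneg (sq_nonneg w) p) (show 0 ≤ 1 - (1 - w + w*z)/2 - w^2 * (z*(1-z)) / 16 by linarith)
      linarith
    linarith
  have key : 2 * c + 2 * w^2 ≤ 2 * a + w^2 * (z * (3 - z)) / 2 := by
    have hu0 : 0 < a + c := by linarith
    have hm : (a - c) * (a + c) = w^2 := by linarith only [ha2]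
    have k2 : 4 * (a + c - 1) ≤ (a + c) * (z * (3 - z)) := by
      rcases le_total (a + c) 1 with h | h
      · have : 0 ≤ (a + c) * (z * (3 - z)) := by
          apply mul_nonneg hu0.le (mul_nonneg hz0 (by linarith))
        linarith
      · have hc34 : c^2 ≤ 3/4 := by nlinarith only [h2, hw, hw2]
        have hc' : c ≤ 867/1000 := by nlinarith only [hc34, hc]
        have ha1 : a ≤ 1 := by nlinarith only [ha2, hc34, hw, hw2, ha]
        have hu : a + c ≤ 187/100 := by linarith
        have hv : (a+c)^2/3 - 161/1000 ≤ z := by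
          have z1 : 4/3 * c^2 ≤ z := by
            rw [hzc]
            have t : w * (2-w) ≤ 3/4 := by
              nlinarith only [mul_nonneg (sub_nonneg.2 hw2) (show 0 ≤ 3/2 - w by linarith)]
            linarith only [mul_le_mul_of_nonneg_left t hz0]
          have t : (a+c)^2 - 483/1000 ≤ 4 * c^2 := by
            have hs : (a-c)*(a+c) ≤ 1/4 := by rw [hm]; nlinarith only [hw, hw2]
            have hd : 2 * c * (a + c) = (a+c)^2 - (a-c)*(a+c) := by ring
            have hd2 : 2 * c * (a + c) ≥ (a+c)^2 - 1/4 := by linarith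
            generalize a + c = u at *
            have : 1 ≤ u^2 := by nlinarith only [h]
            have : u^2 ≤ 35/10 := by nlinarith only [h, hu]
            have h5 : (u^2 - 1/4)^2 ≤ (2*c*u)^2 := pow_le_pow_left₀ (by linarith) hd2 2
            have h6 : (u^2 - 483/1000) * u^2 ≤ 4*c^2*u^2 := by nlinarith only [h5, this]
            exact le_of_mul_le_mul_right h6 (by positivity)
          linarith
        have := aux_poly (a+c) h hu
        have m : ((a+c)^2/3 - 161/1000) * (3 - ((a+c)^2/3 - 161/1000)) ≤ z * (3 - z) := by
          have hv3 : (a+c)^2 / 3 - 161/1000 ≤ 1 := by linarith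
          nlinarith only [mul_nonneg (sub_nonneg.2 hv) (show 0 ≤ 3 - z - ((a+c)^2/3 - 161/1000) by linarith)]
        have := mul_le_mul_of_nonneg_left m hu0.le
        linarith
    have h7 : 0 ≤ w^2 * ((a + c) * (z * (3 - z)) - 4 * (a + c - 1)) :=
      mul_nonneg (sq_nonneg w) (by linarith)
    have h8 : 0 ≤ (2 * a + w^2 * (z * (3 - z)) / 2 - 2 * c - 2 * w^2) * (a + c) := by
      have e : (2 * a + w^2 * (z * (3 - z)) / 2 - 2 * c - 2 * w^2) * (a + c)
        = 2 * ((a - c) * (a + c)) + w^2 * (z * (3 - z)) / 2 * (a + c) - 2 * w^2 * (a + c) := by ring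
      rw [e, hm]
      linarith only [h7]
    have := nonneg_of_mul_nonneg_left h8 hu0
    linarith
  linarith only [key, hbb, hzc, ha2, hb2]

/-- Lemma 1 of the paper: if `c ≥ 0`, `ω ≥ 0`, `c² + ω² ≤ 1` and `c² + (1 − ω)² ≤ 1`,
then `(1 − √(c² + ω²))² + (1 − √(c² + (1 − ω)²))² ≤ (1 − c)²`. -/
theorem sum_bound_lemma (c ω : ℝ) (hc : 0 ≤ c) (hω : 0 ≤ ω)
    (h1 : c ^ 2 + ω ^ 2 ≤ 1) (h2 : c ^ 2 + (1 - ω) ^ 2 ≤ 1) :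
    (1 - Real.sqrt (c ^ 2 + ω ^ 2)) ^ 2 + (1 - Real.sqrt (c ^ 2 + (1 - ω) ^ 2)) ^ 2
      ≤ (1 - c) ^ 2 := by
  have e1 := Real.sq_sqrt (show 0 ≤ c^2 + ω^2 by positivity)
  have e2 := Real.sq_sqrt (show 0 ≤ c^2 + (1-ω)^2 by positivity)
  rcases le_total ω (1/2) with h | h
  · exact aux_half c ω _ _ hc hω h (Real.sqrt_nonneg _) (Real.sqrt_nonneg _) e1 e2 h2
  · have hω1 : ω ≤ 1 := by nlinarith
    rw [add_comm]
    exact aux_half c (1-ω) _ _ hc (by linarith) (by linarith) (Real.sqrt_nonneg _)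
      (Real.sqrt_nonneg _) e2 (by rw [e1]; ring) (by linarith [show (1-(1-ω))^2 = ω^2 by ring])
end

section
/- Let d ≥ 1, let c ≥ 0, and let ω = (ω_1,…,ω_d) ∈ [0,1)^d. Then ∑_{x ∈ ℤ^d, x ≠ 0} ( max(0, 1 − √(c² + ‖ω + x‖²)) )² ≤ ∑_{i=1}^d ( max(0, 1 − √(c² + (1 − ω_i)²)) )², where ‖·‖ is the Euclidean norm on ℝ^d and the left-hand side is a sum of nonnegative terms (only finitely many of which are nonzero). -/
noncomputable def lsbF (u : ℝ) : ℝ := (max 0 (1 - Real.sqrt u)) ^ 2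

lemma lsbF_anti {u v : ℝ} (h : u ≤ v) : lsbF v ≤ lsbF u := by
  unfold lsbF
  have := Real.sqrt_le_sqrt h
  gcongr

lemma lsbF_zero {u : ℝ} (h : 1 ≤ u) : lsbF u = 0 := by
  unfold lsbF
  have : 1 ≤ Real.sqrt u := Real.one_le_sqrt.mpr h
  rw [max_eq_left (by linarith)]
  norm_num

lemma lsbF_nonneg (u : ℝ) : 0 ≤ lsbF u := by unfold lsbF; positivity

lemma lsbF_eq {u : ℝ} (h : u ≤ 1) : lsbF u = (1 - Real.sqrt u) ^ 2 := by
  unfold lsbF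
  have : Real.sqrt u ≤ 1 := Real.sqrt_le_one.mpr h
  rw [max_eq_right (by linarith)]

lemma lsb_real (e p q s : ℝ) (he : 0 ≤ e) (hp : 0 ≤ p) (hq : 0 ≤ q) (hs : 0 ≤ s) (hs1 : s ≤ 1)
    (hp2 : p ^ 2 = e ^ 2 + s ^ 2) (hq2 : q ^ 2 = e ^ 2 + (1 - s) ^ 2)
    (hp1 : p ≤ 1) (hq1 : q ≤ 1) : (1 - p) ^ 2 + (1 - q) ^ 2 ≤ (1 - e) ^ 2 := by
  have hep : e ≤ p := by nlinarith [sq_nonneg s]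
  have heq : e ≤ q := by nlinarith [sq_nonneg (1 - s)]
  rcases le_total (2 * (s * (1 - s))) (e ^ 2) with h | h
  · have h1 : (1 - p) ^ 2 * (1 + e) ≤ (1 - e) * (1 - p ^ 2) := by
      nlinarith [mul_nonneg (sub_nonneg.2 hp1) (sub_nonneg.2 hep)]
    have h2 : (1 - q) ^ 2 * (1 + e) ≤ (1 - e) * (1 - q ^ 2) := by
      nlinarith [mul_nonneg (sub_nonneg.2 hq1) (sub_nonneg.2 heq)]
    have h3 : (1 - e) * (2 - p ^ 2 - q ^ 2) ≤ (1 - e) * (1 - e ^ 2) := by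
      apply mul_le_mul_of_nonneg_left _ (by linarith)
      nlinarith
    have h4 : ((1 - p) ^ 2 + (1 - q) ^ 2) * (1 + e) ≤ (1 - e) ^ 2 * (1 + e) := by nlinarith
    exact le_of_mul_le_mul_right h4 (by linarith)
  · obtain ⟨j, hj⟩ : ∃ j, j = s * (1 - s) - e ^ 2 / 2 := ⟨_, rfl⟩
    have hj0 : 0 ≤ j := by linarith
    have hj1 : j ≤ 1 / 4 := by nlinarith [sq_nonneg (s - 1 / 2)]
    have hpq2 : (p * q) ^ 2 = e ^ 2 + (e ^ 2 / 2 - j) ^ 2 := by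
      rw [mul_pow, hp2, hq2, hj]; ring
    have hsum : p ^ 2 + q ^ 2 = 1 + e ^ 2 - 2 * j := by rw [hp2, hq2, hj]; ring
    have hpq : j ^ 2 + 2 * e * (1 - j) ≤ 2 * (p * q) := by
      apply le_of_sq_le_sq _ (by positivity)
      have k1 : 0 ≤ j * e ^ 2 * (1 / 4 - j) :=
        mul_nonneg (by positivity) (by linarith)
      have k2 : 0 ≤ j ^ 2 * (1 - e + 3 * e ^ 2 - 11 / 12) :=
        mul_nonneg (by positivity) (by nlinarith [sq_nonneg (e - 1 / 6)])
      have k3 : 0 ≤ j ^ 2 * (1 / 16 - j ^ 2) := mul_nonneg (by positivity) (by nlinarith)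
      have k4 : 0 ≤ e * j ^ 3 := by positivity
      have k5 : 0 ≤ e ^ 4 := by positivity
      have : (2 * (p * q)) ^ 2 = 4 * (e ^ 2 + (e ^ 2 / 2 - j) ^ 2) := by rw [mul_pow, hpq2]; ring
      rw [this]
      nlinarith [sq_nonneg j]
    have hfin : 1 + e - j ≤ p + q := by
      apply le_of_sq_le_sq _ (by positivity)
      nlinarith
    nlinarith

lemma lsb_key (u s : ℝ) (hu : 0 ≤ u) (hs : 0 ≤ s) (hs1 : s ≤ 1) :
    lsbF (u + s ^ 2) + lsbF (u + (1 - s) ^ 2) ≤ lsbF u := by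
  rcases le_total 1 (u + s ^ 2) with h | h
  · rw [lsbF_zero h, zero_add]; exact lsbF_anti (by nlinarith [sq_nonneg (1 - s)])
  rcases le_total 1 (u + (1 - s) ^ 2) with h' | h'
  · rw [lsbF_zero h', add_zero]; exact lsbF_anti (by nlinarith [sq_nonneg s])
  rw [lsbF_eq h, lsbF_eq h', lsbF_eq (by nlinarith [sq_nonneg s])]
  refine lsb_real _ _ _ s (Real.sqrt_nonneg _) (Real.sqrt_nonneg _) (Real.sqrt_nonneg _) hs hs1
    ?_ ?_ (Real.sqrt_le_one.mpr h) (Real.sqrt_le_one.mpr h')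
  · rw [Real.sq_sqrt hu, Real.sq_sqrt (by positivity)]
  · rw [Real.sq_sqrt hu, Real.sq_sqrt (by positivity)]

lemma lsb_ind {ι : Type*} [DecidableEq ι] (w : ι → ℝ) (hw : ∀ i, 0 ≤ w i ∧ w i < 1)
    (t : Finset ι) : ∀ u : ℝ, 0 ≤ u →
    ∑ S ∈ t.powerset, lsbF (u + ∑ i ∈ t, w i ^ 2 + ∑ i ∈ S, ((1 - w i) ^ 2 - w i ^ 2))
      ≤ lsbF (u + ∑ i ∈ t, w i ^ 2) + ∑ i ∈ t, lsbF (u + (1 - w i) ^ 2) := by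
  induction t using Finset.induction_on with
  | empty => intro u hu; simp
  | insert j t hj ih =>
    intro u hu
    rw [Finset.sum_powerset_insert hj, Finset.sum_insert hj, Finset.sum_insert hj]
    have h1 := ih (u + w j ^ 2) (by positivity)
    have h2 := ih (u + (1 - w j) ^ 2) (by positivity)
    have e1 : ∑ S ∈ t.powerset, lsbF (u + (w j ^ 2 + ∑ i ∈ t, w i ^ 2)
          + ∑ i ∈ S, ((1 - w i) ^ 2 - w i ^ 2))
        = ∑ S ∈ t.powerset, lsbF (u + w j ^ 2 + ∑ i ∈ t, w i ^ 2
          + ∑ i ∈ S, ((1 - w i) ^ 2 - w i ^ 2)) := by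
      simp only [add_assoc]
    have e2 : ∑ S ∈ t.powerset, lsbF (u + (w j ^ 2 + ∑ i ∈ t, w i ^ 2)
          + ∑ i ∈ insert j S, ((1 - w i) ^ 2 - w i ^ 2))
        = ∑ S ∈ t.powerset, lsbF (u + (1 - w j) ^ 2 + ∑ i ∈ t, w i ^ 2
          + ∑ i ∈ S, ((1 - w i) ^ 2 - w i ^ 2)) := by
      refine Finset.sum_congr rfl fun S hS => ?_
      rw [Finset.sum_insert fun h => hj (Finset.mem_powerset.1 hS h)]
      congr 1; ring
    rw [e1, e2]
    have h3 : lsbF (u + (1 - w j) ^ 2 + ∑ i ∈ t, w i ^ 2) ≤ lsbF (u + (1 - w j) ^ 2) :=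
      lsbF_anti (le_add_of_nonneg_right (Finset.sum_nonneg fun i _ => sq_nonneg _))
    have h4 : ∑ i ∈ t, lsbF (u + w j ^ 2 + (1 - w i) ^ 2)
        + ∑ i ∈ t, lsbF (u + (1 - w j) ^ 2 + (1 - w i) ^ 2)
        ≤ ∑ i ∈ t, lsbF (u + (1 - w i) ^ 2) := by
      rw [← Finset.sum_add_distrib]
      refine Finset.sum_le_sum fun i _ => ?_
      have := lsb_key (u + (1 - w i) ^ 2) (w j) (by positivity) (hw j).1 (hw j).2.le
      rwa [add_right_comm u, add_right_comm u ((1 - w j) ^ 2)]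
    rw [← add_assoc u]
    linarith

/-- The negated indicator of a finite set, as a lattice point. -/
def lsbPt {d : ℕ} (S : Finset (Fin d)) : Fin d → ℤ := fun i => if i ∈ S then -1 else 0

lemma lsbPt_inj {d : ℕ} : Function.Injective (lsbPt (d := d)) := by
  intro S T h
  ext i
  have := congrFun h i
  unfold lsbPt at this
  by_cases h1 : i ∈ S <;> by_cases h2 : i ∈ T <;> simp_all

/-- The induction step bound in the proof of Theorem 2: for `c ≥ 0` and
`ω ∈ [0,1)^d`,
`∑_{x ∈ ℤ^d, x ≠ 0} (max(0, 1 − √(c² + ‖ω + x‖²)))² ≤ ∑ᵢ (max(0, 1 − √(c² + (1 − ωᵢ)²)))²`,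
where `‖ω + x‖² = ∑ᵢ (ωᵢ + xᵢ)²` is the squared Euclidean norm. -/
theorem lattice_sum_bound (d : ℕ) (hd : 1 ≤ d) (c : ℝ) (hc : 0 ≤ c)
    (ω : Fin d → ℝ) (hω : ∀ i, 0 ≤ ω i ∧ ω i < 1) :
    (∑' x : {x : Fin d → ℤ // x ≠ 0},
        (max 0 (1 - Real.sqrt (c ^ 2 + ∑ i, (ω i + (x.1 i : ℝ)) ^ 2))) ^ 2)
      ≤ ∑ i, (max 0 (1 - Real.sqrt (c ^ 2 + (1 - ω i) ^ 2))) ^ 2 := by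
  classical
  change (∑' x : {x : Fin d → ℤ | x ≠ 0},
      (fun x : Fin d → ℤ => lsbF (c ^ 2 + ∑ i, (ω i + (x i : ℝ)) ^ 2)) x)
      ≤ ∑ i, lsbF (c ^ 2 + (1 - ω i) ^ 2)
  rw [tsum_subtype {x : Fin d → ℤ | x ≠ 0}
    (fun x : Fin d → ℤ => lsbF (c ^ 2 + ∑ i, (ω i + (x i : ℝ)) ^ 2))]
  have hind := lsb_ind ω hω Finset.univ (c ^ 2) (by positivity)
  have hpt : ∀ S : Finset (Fin d), ∑ i, (ω i + (lsbPt S i : ℝ)) ^ 2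
      = ∑ i, ω i ^ 2 + ∑ i ∈ S, ((1 - ω i) ^ 2 - ω i ^ 2) := by
    intro S
    have : ∑ i ∈ S, ((1 - ω i) ^ 2 - ω i ^ 2)
        = ∑ i, if i ∈ S then ((1 - ω i) ^ 2 - ω i ^ 2) else 0 := by simp
    rw [this, ← Finset.sum_add_distrib]
    refine Finset.sum_congr rfl fun i _ => ?_
    unfold lsbPt
    split_ifs <;> push_cast <;> ring
  rw [tsum_eq_sum (s := Finset.univ.image lsbPt), Finset.sum_image lsbPt_inj.injOn]
  · rw [Finset.powerset_univ] at hind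
    rw [← Finset.add_sum_erase _ _ (Finset.mem_univ ∅)] at hind ⊢
    have h0 : (lsbPt (∅ : Finset (Fin d))) = 0 := by ext i; simp [lsbPt]
    rw [h0, Set.indicator_of_notMem (by simp), zero_add]
    simp only [Finset.sum_empty, add_zero] at hind
    refine le_trans (Finset.sum_le_sum fun S _ => ?_) (le_of_add_le_add_left hind)
    refine (Set.indicator_le_self' (fun _ _ => lsbF_nonneg _) _).trans (le_of_eq ?_)
    simp only [hpt, add_assoc]
  · intro x hx
    have hex : ∃ i, x i ≠ 0 ∧ x i ≠ -1 := by
      by_contra! hcon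
      apply hx
      refine Finset.mem_image.2 ⟨Finset.univ.filter fun i => x i ≠ 0, Finset.mem_univ _, ?_⟩
      ext i
      by_cases h : x i = 0
      · simp [lsbPt, h]
      · simp [lsbPt, hcon i h]
    obtain ⟨i, hi0, hi1⟩ := hex
    refine Set.indicator_apply_eq_zero.2 fun _ => lsbF_zero ?_
    have h1 : (ω i + (x i : ℝ)) ^ 2 ≤ ∑ i, (ω i + (x i : ℝ)) ^ 2 :=
      Finset.single_le_sum (f := fun i => (ω i + (x i : ℝ)) ^ 2) (fun i _ => sq_nonneg _)
        (Finset.mem_univ i)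
    have h2 : 1 ≤ (ω i + (x i : ℝ)) ^ 2 := by
      obtain ⟨ha, hb⟩ := hω i
      rcases (by omega : 1 ≤ x i ∨ x i ≤ -2) with h | h
      · have : (1 : ℝ) ≤ x i := by exact_mod_cast h
        nlinarith
      · have : (x i : ℝ) ≤ -2 := by exact_mod_cast h
        nlinarith
    nlinarith [sq_nonneg c]
end

section
/- Let d ≥ 1 and define K̂ : ℝ^d → ℝ by K̂(u) = max(0, 1 − ‖u‖), where ‖·‖ is the Euclidean norm. Then for every ω ∈ ℝ^d: (1 − K̂(ω))² + ∑_{x ∈ ℤ^d, x ≠ 0} K̂(ω + x)² ≤ 2 ‖ω‖². -/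
lemma kpb_sum_card {ι : Type*} [DecidableEq ι] (b : ι → ℝ) (s : Finset ι) :
    (∑ A ∈ s.powerset, (∏ i ∈ A, b i) * ∏ i ∈ s \ A, (1 - b i) = 1) ∧
    (∑ A ∈ s.powerset, (A.card : ℝ) * ((∏ i ∈ A, b i) * ∏ i ∈ s \ A, (1 - b i)) = ∑ i ∈ s, b i) := by
  induction s using Finset.induction_on with
  | empty => simp
  | insert a s ha ih =>
    obtain ⟨h1, h2⟩ := ih
    have e1 : ∀ A ∈ s.powerset, ∏ i ∈ insert a s \ A, (1 - b i)
        = (1 - b a) * ∏ i ∈ s \ A, (1 - b i) := by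
      intro A hA
      have hA' := Finset.mem_powerset.1 hA
      rw [Finset.insert_sdiff_of_notMem _ (fun h => ha (hA' h)), Finset.prod_insert]
      simp [ha]
    have e2 : ∀ A ∈ s.powerset, ∏ i ∈ insert a s \ insert a A, (1 - b i)
        = ∏ i ∈ s \ A, (1 - b i) := by
      intro A hA
      congr 1
      ext i
      simp only [Finset.mem_sdiff, Finset.mem_insert]
      constructor
      · tauto
      · rintro ⟨h, h'⟩
        refine ⟨Or.inr h, ?_⟩
        rintro (rfl | h3) <;> tauto
    have e3 : ∀ A ∈ s.powerset, ∏ i ∈ insert a A, b i = b a * ∏ i ∈ A, b i := by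
      intro A hA
      exact Finset.prod_insert (fun h => ha (Finset.mem_powerset.1 hA h))
    have e4 : ∀ A ∈ s.powerset, ((insert a A).card : ℝ) = A.card + 1 := by
      intro A hA
      rw [Finset.card_insert_of_notMem (fun h => ha (Finset.mem_powerset.1 hA h))]
      push_cast; ring
    rw [Finset.sum_powerset_insert ha, Finset.sum_powerset_insert ha, Finset.sum_insert ha]
    constructor
    · rw [← Finset.sum_add_distrib]
      refine Eq.trans ?_ h1
      refine Finset.sum_congr rfl fun A hA => ?_
      rw [e1 A hA, e2 A hA, e3 A hA]; ring
    · have h3 : b a = ∑ A ∈ s.powerset, b a * ((∏ i ∈ A, b i) * ∏ i ∈ s \ A, (1 - b i)) := by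
        rw [← Finset.mul_sum, h1, mul_one]
      refine Eq.trans ?_ (congrArg₂ (· + ·) h3.symm h2)
      rw [← Finset.sum_add_distrib, ← Finset.sum_add_distrib]
      refine Finset.sum_congr rfl fun A hA => ?_
      rw [e1 A hA, e2 A hA, e3 A hA, e4 A hA]; ring

lemma kpb_prod {ι : Type*} (b : ι → ℝ) (s : Finset ι)
    (h0 : ∀ i ∈ s, 0 ≤ b i) (h1 : ∀ i ∈ s, b i ≤ 1) :
    1 - ∑ i ∈ s, b i ≤ ∏ i ∈ s, (1 - b i) := by
  classical
  induction s using Finset.induction_on with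
  | empty => simp
  | insert a s ha ih =>
    rw [Finset.sum_insert ha, Finset.prod_insert ha]
    have := ih (fun i hi => h0 i (by simp [hi])) (fun i hi => h1 i (by simp [hi]))
    have ha0 := h0 a (by simp)
    have ha1 := h1 a (by simp)
    have hs : 0 ≤ ∑ i ∈ s, b i := Finset.sum_nonneg fun i hi => h0 i (by simp [hi])
    nlinarith [mul_le_mul_of_nonneg_left this (sub_nonneg.2 ha1), mul_nonneg ha0 hs]

lemma kpb_three (t u v : ℝ) (ht : 0 ≤ t) (hu : 0 ≤ u) (hv : 0 ≤ v)
    (h : t ^ 2 + u ^ 2 + v ^ 2 ≤ 1) :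
    1 - ((1 - t) ^ 2 + (1 - u) ^ 2 + (1 - v) ^ 2) ≤ 3 * (t * u * v) := by
  obtain ⟨x, hx⟩ : ∃ x, x = t + u + v := ⟨_, rfl⟩
  obtain ⟨y, hy⟩ : ∃ y, y = t * u + u * v + v * t := ⟨_, rfl⟩
  obtain ⟨z, hz⟩ : ∃ z, z = t * u * v := ⟨_, rfl⟩
  have hx0 : 0 ≤ x := by rw [hx]; positivity
  have schur : 0 ≤ x ^ 3 - 4 * x * y + 9 * z := by
    have key : ∀ a b c : ℝ, 0 ≤ a → 0 ≤ b → 0 ≤ c → a ≤ b → b ≤ c →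
        0 ≤ a * (a - b) * (a - c) + b * (b - a) * (b - c) + c * (c - a) * (c - b) := by
      intro a b c ha hb hc h1 h2
      have i1 : 0 ≤ a * ((b - a) * (c - a)) :=
        mul_nonneg ha (mul_nonneg (by linarith) (by linarith))
      have i2 : 0 ≤ (c - b) * ((c - b) * (c + b - a)) :=
        mul_nonneg (by linarith) (mul_nonneg (by linarith) (by linarith))
      nlinarith
    have : x ^ 3 - 4 * x * y + 9 * z =
      t * (t - u) * (t - v) + u * (u - t) * (u - v) + v * (v - t) * (v - u) := by
      rw [hx, hy, hz]; ring
    rw [this]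
    rcases le_total t u with a | a <;> rcases le_total u v with b | b <;>
      rcases le_total t v with c | c
    · linarith [key t u v ht hu hv a b]
    · linarith [key t u v ht hu hv a b]
    · linarith [key t v u ht hv hu c b]
    · linarith [key v t u hv ht hu c a]
    · linarith [key u t v hu ht hv a c]
    · linarith [key u v t hu hv ht b c]
    · linarith [key v u t hv hu ht b a]
    · linarith [key v u t hv hu ht b a]
  have hy1 : x ^ 2 - 2 * y ≤ 1 := by rw [hx, hy]; nlinarith
  have hy2 : 3 * y ≤ x ^ 2 := by
    rw [hx, hy]; nlinarith [sq_nonneg (t - u), sq_nonneg (u - v), sq_nonneg (v - t)]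
  have goal' : 0 ≤ 3 * z + 2 - 2 * x + x ^ 2 - 2 * y := by
    rcases le_total x (3 / 2) with hc | hc
    · have : 0 ≤ x ^ 3 / 9 + 2 - 2 * x + x ^ 2 / 3 := by
        nlinarith [mul_nonneg hx0 (sq_nonneg (x - 3 / 2)), sq_nonneg (x - 3 / 2)]
      nlinarith [mul_nonneg (sub_nonneg.2 hc) (sub_nonneg.2 hy2)]
    · have : 0 ≤ x * (x ^ 2 - 2) / 3 + 3 - 2 * x := by
        nlinarith [mul_nonneg hx0 (sq_nonneg (x - 8 / 5)), sq_nonneg (x - 8 / 5)]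
      nlinarith [mul_nonneg (sub_nonneg.2 hc) (sub_nonneg.2 hy1)]
  rw [hx, hy, hz] at goal'
  nlinarith

/-- the bound without the complement coordinates -/
lemma kpb_inner {ι : Type*} (t : ι → ℝ) (A : Finset ι) (hA : A.Nonempty)
    (h0 : ∀ i, 0 ≤ t i) (hr : ∑ i ∈ A, (t i) ^ 2 ≤ 1)
    (hP : ∑ i ∈ A, (1 - t i) ^ 2 < 1) :
    (1 - Real.sqrt (∑ i ∈ A, (1 - t i) ^ 2)) ^ 2 ≤ (A.card : ℝ) * ∏ i ∈ A, (t i) ^ 2 := by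
  classical
  set P := Real.sqrt (∑ i ∈ A, (1 - t i) ^ 2) with hPd
  have ha0 : 0 ≤ ∑ i ∈ A, (1 - t i) ^ 2 := Finset.sum_nonneg fun i _ => sq_nonneg _
  have hP0 : 0 ≤ P := Real.sqrt_nonneg _
  have hP2 : P ^ 2 = ∑ i ∈ A, (1 - t i) ^ 2 := Real.sq_sqrt ha0
  have hP1 : P < 1 := by nlinarith
  have hcard : A.card < 4 := by
    have h1 : (A.card : ℝ) ≤ 2 * (∑ i ∈ A, (t i) ^ 2 + ∑ i ∈ A, (1 - t i) ^ 2) := by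
      rw [← Finset.sum_add_distrib, Finset.mul_sum, Finset.card_eq_sum_ones]
      push_cast
      refine Finset.sum_le_sum fun i _ => ?_
      nlinarith [sq_nonneg (2 * t i - 1)]
    have : (A.card : ℝ) < 4 := by linarith
    exact_mod_cast this
  have hk : (A.card : ℝ) ≤ (1 + P) ^ 2 := by
    have h1 : (A.card : ℝ) = ∑ i ∈ A, (t i) ^ 2 + 2 * ∑ i ∈ A, t i * (1 - t i)
        + ∑ i ∈ A, (1 - t i) ^ 2 := by
      rw [Finset.mul_sum, ← Finset.sum_add_distrib, ← Finset.sum_add_distrib,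
        Finset.card_eq_sum_ones]
      push_cast
      refine Finset.sum_congr rfl fun i _ => ?_
      ring
    have h2 := Finset.sum_mul_sq_le_sq_mul_sq A t (fun i => 1 - t i)
    have h3 : ∑ i ∈ A, t i * (1 - t i) ≤ P := by
      refine abs_le_of_sq_le_sq' ?_ hP0 |>.2
      rw [← hP2] at h2
      nlinarith [sq_nonneg P]
    rw [h1, ← hP2]; nlinarith
  have fin : ∀ q : ℝ, ∏ i ∈ A, (t i) ^ 2 = q ^ 2 → 1 - P ^ 2 ≤ A.card * q →
      (1 - P) ^ 2 ≤ (A.card : ℝ) * ∏ i ∈ A, (t i) ^ 2 := by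
    intro q hq h
    rw [hq]
    have hc : (0 : ℝ) < A.card := by exact_mod_cast hA.card_pos
    have e : 0 ≤ 1 - P ^ 2 := by nlinarith
    have h1 : (1 - P ^ 2) ^ 2 ≤ (A.card * q) ^ 2 := pow_le_pow_left₀ e h 2
    have h2 : (A.card : ℝ) * (1 - P) ^ 2 ≤ (1 + P) ^ 2 * (1 - P) ^ 2 :=
      mul_le_mul_of_nonneg_right hk (sq_nonneg _)
    have h3 : (A.card : ℝ) * (1 - P) ^ 2 ≤ A.card * (A.card * q ^ 2) := by nlinarith
    exact le_of_mul_le_mul_left h3 hc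
  have hpos := hA.card_pos
  have : A.card = 1 ∨ A.card = 2 ∨ A.card = 3 := by omega
  rcases this with h | h | h
  · obtain ⟨a, rfl⟩ := Finset.card_eq_one.1 h
    simp only [Finset.sum_singleton, Finset.prod_singleton, Finset.card_singleton] at *
    have : |1 - t a| = P := by rw [hPd, Real.sqrt_sq_eq_abs]
    have h5 := le_abs_self (1 - t a)
    push_cast
    nlinarith
  · obtain ⟨a, b, hab, rfl⟩ := Finset.card_eq_two.1 h
    apply fin (t a * t b)
    · rw [Finset.prod_pair hab]; ring
    · rw [hP2, h, Finset.sum_pair hab]; push_cast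
      nlinarith [sq_nonneg (t a + t b - 1)]
  · obtain ⟨a, b, c, hab, hac, hbc, rfl⟩ := Finset.card_eq_three.1 h
    have n1 : a ∉ ({b, c} : Finset ι) := by simp [hab, hac]
    apply fin (t a * t b * t c)
    · rw [Finset.prod_insert n1, Finset.prod_pair hbc]; ring
    · rw [Finset.sum_insert n1, Finset.sum_pair hbc] at hr
      rw [hP2, h, Finset.sum_insert n1, Finset.sum_pair hbc]; push_cast
      linarith [kpb_three (t a) (t b) (t c) (h0 a) (h0 b) (h0 c) (by linarith)]

lemma kpb_point {d : ℕ} (t : Fin d → ℝ) (A : Finset (Fin d)) (hA : A.Nonempty)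
    (h0 : ∀ i, 0 ≤ t i) (hr : ∑ i, (t i) ^ 2 ≤ 1)
    (hP : ∑ i ∈ A, (1 - t i) ^ 2 + ∑ i ∈ Finset.univ \ A, (t i) ^ 2 < 1) :
    (1 - Real.sqrt (∑ i ∈ A, (1 - t i) ^ 2 + ∑ i ∈ Finset.univ \ A, (t i) ^ 2)) ^ 2 ≤
      (A.card : ℝ) * ((∏ i ∈ A, (t i) ^ 2) * ∏ i ∈ Finset.univ \ A, (1 - (t i) ^ 2)) := by
  have ha0 : 0 ≤ ∑ i ∈ A, (1 - t i) ^ 2 := Finset.sum_nonneg fun i _ => sq_nonneg _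
  have hv0 : 0 ≤ ∑ i ∈ Finset.univ \ A, (t i) ^ 2 := Finset.sum_nonneg fun i _ => sq_nonneg _
  have hrA : ∑ i ∈ A, (t i) ^ 2 ≤ 1 :=
    (Finset.sum_le_univ_sum_of_nonneg fun i => sq_nonneg _).trans hr
  have h1 := kpb_inner t A hA h0 hrA (by linarith)
  have ht1 : ∀ i, (t i) ^ 2 ≤ 1 := fun i =>
    (Finset.single_le_sum (f := fun i => (t i) ^ 2) (fun i _ => sq_nonneg _)
      (Finset.mem_univ i)).trans hr
  have h2 := kpb_prod (fun i => (t i) ^ 2) (Finset.univ \ A) (fun i _ => sq_nonneg _)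
    (fun i _ => ht1 i)
  set a := ∑ i ∈ A, (1 - t i) ^ 2
  set v := ∑ i ∈ Finset.univ \ A, (t i) ^ 2
  have hs0 : 0 ≤ √(a + v) := Real.sqrt_nonneg _
  have hP0 : 0 ≤ √a := Real.sqrt_nonneg _
  have hs2 : √(a + v) ^ 2 = a + v := Real.sq_sqrt (by linarith)
  have hP2 : √a ^ 2 = a := Real.sq_sqrt ha0
  have hPs : √a ≤ √(a + v) := Real.sqrt_le_sqrt (by linarith)
  have key : (1 - √(a + v)) ^ 2 ≤ (1 - √a) ^ 2 * (1 - v) := by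
    have hv : v = √(a + v) ^ 2 - √a ^ 2 := by linarith
    have hs1 : √(a + v) < 1 := by nlinarith
    rw [show (1 - √a) ^ 2 * (1 - v) = (1 - √a) ^ 2 * (1 - (√(a + v) ^ 2 - √a ^ 2)) by rw [← hv]]
    generalize √(a + v) = s at *
    generalize √a = P at *
    have h3 : 0 ≤ (2 - s - P) - (1 - P) ^ 2 * (s + P) := by
      have : (1 - P) ^ 2 * (s + P) ≤ (1 - P) ^ 2 * (1 + P) :=
        mul_le_mul_of_nonneg_left (by linarith) (sq_nonneg _)
      nlinarith [mul_nonneg (sub_nonneg.2 (hPs.trans hs1.le)) (sq_nonneg P)]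
    nlinarith [mul_nonneg (sub_nonneg.2 hPs) h3]
  calc _ ≤ _ := key
    _ ≤ ((A.card : ℝ) * ∏ i ∈ A, (t i) ^ 2) * ∏ i ∈ Finset.univ \ A, (1 - (t i) ^ 2) :=
      mul_le_mul h1 h2 (by linarith) (mul_nonneg (by positivity)
        (Finset.prod_nonneg fun i _ => sq_nonneg _))
    _ = _ := by ring

/-- coordinates of a nearby lattice translate -/
lemma kpb_coord (w : ℝ) (n : ℤ) (hw : |w| ≤ 1) (hn : n ≠ 0) (h : |w + n| < 1) :
    (n = 1 ∧ w < 0) ∨ (n = -1 ∧ 0 < w) := by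
  rw [abs_le] at hw
  rw [abs_lt] at h
  have h1 : (n : ℝ) < 2 := by linarith
  have h2 : (-2 : ℝ) < n := by linarith
  have h3 : n < 2 := by exact_mod_cast h1
  have h4 : -2 < n := by exact_mod_cast h2
  have : n = 1 ∨ n = -1 := by omega
  rcases this with rfl | rfl
  · left; refine ⟨rfl, ?_⟩; push_cast at h; linarith
  · right; refine ⟨rfl, ?_⟩; push_cast at h; linarith

lemma kpb_main {d : ℕ} (K : (Fin d → ℝ) → ℝ)
    (hK : ∀ u : Fin d → ℝ, K u = max 0 (1 - Real.sqrt (∑ i, (u i) ^ 2)))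
    (w : Fin d → ℝ) (hr : ∑ i, (w i) ^ 2 ≤ 1) (s : Finset (Fin d → ℤ)) (hs : 0 ∉ s) :
    ∑ x ∈ s, (K (w + fun i => (x i : ℝ))) ^ 2 ≤ ∑ i, (w i) ^ 2 := by
  classical
  have hw1 : ∀ i, |w i| ≤ 1 := fun i => by
    have := (Finset.single_le_sum (f := fun i => (w i) ^ 2) (fun i _ => sq_nonneg _)
      (Finset.mem_univ i)).trans hr
    exact abs_le_one_iff_mul_self_le_one.2 (by simpa [sq] using this)
  have hlt : ∀ x : Fin d → ℤ, K (w + fun i => (x i : ℝ)) ≠ 0 →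
      ∑ i, (w i + x i) ^ 2 < 1 := by
    intro x hx
    by_contra hcon
    apply hx
    rw [hK]
    apply max_eq_left
    have : 1 ≤ √(∑ i, (w i + x i) ^ 2) := Real.one_le_sqrt.2 (not_lt.1 hcon)
    simpa using this
  have hco : ∀ x : Fin d → ℤ, K (w + fun i => (x i : ℝ)) ≠ 0 → ∀ i, x i ≠ 0 →
      (x i = 1 ∧ w i < 0) ∨ (x i = -1 ∧ 0 < w i) := by
    intro x hx i hi
    apply kpb_coord _ _ (hw1 i) hi
    have := (Finset.single_le_sum (f := fun i => (w i + x i) ^ 2) (fun i _ => sq_nonneg _)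
      (Finset.mem_univ i)).trans_lt (hlt x hx)
    exact (sq_lt_one_iff_abs_lt_one _).1 this
  let S : (Fin d → ℤ) → Finset (Fin d) := fun x => Finset.univ.filter fun i => x i ≠ 0
  let G : Finset (Fin d) → ℝ := fun A =>
    (A.card : ℝ) * ((∏ i ∈ A, (w i) ^ 2) * ∏ i ∈ Finset.univ \ A, (1 - (w i) ^ 2))
  have hG0 : ∀ A, 0 ≤ G A := by
    intro A
    refine mul_nonneg (by positivity) (mul_nonneg (Finset.prod_nonneg fun i _ => sq_nonneg _)
      (Finset.prod_nonneg fun i _ => ?_))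
    have := (sq_le_one_iff_abs_le_one _).2 (hw1 i)
    linarith
  have hGs : ∑ A, G A = ∑ i, (w i) ^ 2 := by
    have := (kpb_sum_card (fun i => (w i) ^ 2) (Finset.univ : Finset (Fin d))).2
    simpa [G] using this
  set s' := s.filter fun x => K (w + fun i => (x i : ℝ)) ≠ 0 with hs'
  have e1 : ∑ x ∈ s, (K (w + fun i => (x i : ℝ))) ^ 2
      = ∑ x ∈ s', (K (w + fun i => (x i : ℝ))) ^ 2 := by
    rw [hs', Finset.sum_filter_of_ne]
    intro x _ hx h
    exact hx (by rw [h]; simp)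
  have e2 : ∀ x ∈ s', (K (w + fun i => (x i : ℝ))) ^ 2 ≤ G (S x) := by
    intro x hx
    rw [hs', Finset.mem_filter] at hx
    obtain ⟨hxs, hx⟩ := hx
    have hne : (S x).Nonempty := by
      by_contra hcon
      rw [Finset.not_nonempty_iff_eq_empty] at hcon
      apply hs
      have : x = 0 := by
        ext i
        by_contra hi
        have : i ∈ S x := by simpa [S] using hi
        rw [hcon] at this
        simp at this
      rwa [← this]
    have hsum : ∑ i, (w i + x i) ^ 2 =
        ∑ i ∈ S x, (1 - |w i|) ^ 2 + ∑ i ∈ Finset.univ \ S x, |w i| ^ 2 := by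
      rw [← Finset.sum_sdiff (Finset.subset_univ (S x)), add_comm]
      congr 1
      · refine Finset.sum_congr rfl fun i hi => ?_
        have hi' : x i ≠ 0 := by simpa [S] using hi
        rcases hco x hx i hi' with ⟨h, h'⟩ | ⟨h, h'⟩
        · rw [h, abs_of_neg h']; push_cast; ring
        · rw [h, abs_of_pos h']; push_cast; ring
      · refine Finset.sum_congr rfl fun i hi => ?_
        have hi' : x i = 0 := by simpa [S] using hi
        rw [hi']; simp
    have hl := hlt x hx
    rw [hsum] at hl
    have := kpb_point (fun i => |w i|) (S x) hne (fun i => abs_nonneg _)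
      (by simpa using hr) hl
    rw [← hsum] at this hl
    have hle : √(∑ i, (w i + x i) ^ 2) ≤ 1 := Real.sqrt_le_one.2 hl.le
    have hKx : K (w + fun i => (x i : ℝ)) = 1 - √(∑ i, (w i + x i) ^ 2) := by
      rw [hK]
      exact max_eq_right (by simpa using hle)
    rw [hKx]
    simpa [G] using this
  have hinj : Set.InjOn S s' := by
    intro x hx y hy hxy
    have hx' : K (w + fun i => (x i : ℝ)) ≠ 0 := (Finset.mem_filter.1 hx).2
    have hy' : K (w + fun i => (y i : ℝ)) ≠ 0 := (Finset.mem_filter.1 hy).2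
    ext i
    have hiff : x i ≠ 0 ↔ y i ≠ 0 := by
      have : i ∈ S x ↔ i ∈ S y := by rw [hxy]
      simpa [S] using this
    by_cases h : x i = 0
    · have : y i = 0 := by
        by_contra h2
        exact hiff.2 h2 h
      rw [h, this]
    · rcases hco x hx' i h with ⟨a, b⟩ | ⟨a, b⟩ <;>
        rcases hco y hy' i (hiff.1 h) with ⟨a', b'⟩ | ⟨a', b'⟩
      · rw [a, a']
      · linarith
      · linarith
      · rw [a, a']
  calc _ = _ := e1
    _ ≤ ∑ x ∈ s', G (S x) := Finset.sum_le_sum e2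
    _ = ∑ A ∈ s'.image S, G A := (Finset.sum_image hinj).symm
    _ ≤ ∑ A, G A := Finset.sum_le_univ_sum_of_nonneg hG0
    _ = _ := hGs

lemma kpb_one {d : ℕ} (K : (Fin d → ℝ) → ℝ)
    (hK : ∀ u : Fin d → ℝ, K u = max 0 (1 - Real.sqrt (∑ i, (u i) ^ 2)))
    (w : Fin d → ℝ) (s : Finset (Fin d → ℤ)) :
    ∑ x ∈ s, (K (w + fun i => (x i : ℝ))) ^ 2 ≤ 1 := by
  classical
  by_cases h : ∀ x ∈ s, K (w + fun i => (x i : ℝ)) = 0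
  · rw [Finset.sum_eq_zero]
    · norm_num
    · intro x hx
      rw [h x hx]; simp
  · push Not at h
    obtain ⟨x₀, hx₀, hne⟩ := h
    set p : Fin d → ℝ := w + fun i => (x₀ i : ℝ) with hp
    have hp1 : √(∑ i, (p i) ^ 2) < 1 := by
      by_contra hcon
      apply hne
      rw [hK]
      exact max_eq_left (by linarith)
    have hp0 : 0 ≤ √(∑ i, (p i) ^ 2) := Real.sqrt_nonneg _
    have hp2 : √(∑ i, (p i) ^ 2) ^ 2 = ∑ i, (p i) ^ 2 :=
      Real.sq_sqrt (Finset.sum_nonneg fun i _ => sq_nonneg _)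
    have hKp : K p = 1 - √(∑ i, (p i) ^ 2) := by
      rw [hK]; exact max_eq_right (by linarith)
    have hm := kpb_main K hK p (by nlinarith) ((s.erase x₀).image fun x => x - x₀) (by
      simp only [Finset.mem_image, Finset.mem_erase, not_exists, not_and]
      rintro x ⟨hx, _⟩ h
      exact hx (sub_eq_zero.1 h))
    rw [Finset.sum_image (fun x _ y _ h => by simpa using h)] at hm
    have hc : ∀ x : Fin d → ℤ, (p + fun i => (((x - x₀) i : ℤ) : ℝ)) = w + fun i => (x i : ℝ) := by
      intro x
      ext i
      simp [hp]
    simp only [hc] at hm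
    rw [← Finset.add_sum_erase s _ hx₀, ← hp, hKp]
    nlinarith

theorem kernel_pointwise_bound (d : ℕ) (hd : 1 ≤ d)
    (K : (Fin d → ℝ) → ℝ)
    (hK : ∀ u : Fin d → ℝ, K u = max 0 (1 - Real.sqrt (∑ i, (u i) ^ 2))) :
    ∀ ω : Fin d → ℝ,
      (1 - K ω) ^ 2 +
          (∑' x : {x : Fin d → ℤ // x ≠ 0}, (K (ω + fun i => ((x.1 i : ℝ)))) ^ 2)
        ≤ 2 * ∑ i, (ω i) ^ 2 := by
  intro w
  classical
  have hn : 0 ≤ ∑ i, (w i) ^ 2 := Finset.sum_nonneg fun i _ => sq_nonneg _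
  have hmap : ∀ s : Finset {x : Fin d → ℤ // x ≠ 0},
      ∑ x ∈ s, (K (w + fun i => ((x.1 i : ℝ)))) ^ 2 =
      ∑ x ∈ s.map (Function.Embedding.subtype _), (K (w + fun i => (x i : ℝ))) ^ 2 := by
    intro s
    rw [Finset.sum_map]; rfl
  have hs0 : 0 ≤ √(∑ i, (w i) ^ 2) := Real.sqrt_nonneg _
  have hs2 : √(∑ i, (w i) ^ 2) ^ 2 = ∑ i, (w i) ^ 2 := Real.sq_sqrt hn
  rcases le_total (∑ i, (w i) ^ 2) 1 with h | h
  · have hT : (∑' x : {x : Fin d → ℤ // x ≠ 0}, (K (w + fun i => ((x.1 i : ℝ)))) ^ 2)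
        ≤ ∑ i, (w i) ^ 2 := by
      apply Real.tsum_le_of_sum_le (fun x => sq_nonneg _)
      intro s
      rw [hmap]
      exact kpb_main K hK w h _ (by simp)
    have hle := Real.sqrt_le_one.2 h
    have : K w = 1 - √(∑ i, (w i) ^ 2) := by
      rw [hK]; exact max_eq_right (by linarith)
    rw [this]
    nlinarith
  · have hT : (∑' x : {x : Fin d → ℤ // x ≠ 0}, (K (w + fun i => ((x.1 i : ℝ)))) ^ 2)
        ≤ 1 := by
      apply Real.tsum_le_of_sum_le (fun x => sq_nonneg _)
      intro s
      rw [hmap]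
      exact kpb_one K hK w _
    have hle := Real.one_le_sqrt.2 h
    have : K w = 0 := by
      rw [hK]; exact max_eq_left (by linarith)
    rw [this]
    nlinarith
end

section
/- For all real θ > 0, h > 0 and ω ∈ ℝ: ∑_{k ∈ ℤ} θ / ((ω + k/h)² + θ²) = π h coth(πθh) · 1 / (1 + sin²(πhω) (coth²(πθh) − 1)). -/
open Real

lemma lattice_aux (a b : ℝ) (hb : 0 < b) :
    (∑' k : ℤ, b / ((a + (k : ℝ)) ^ 2 + b ^ 2)) =
      -((π : ℂ) * Complex.cot (π * (⟨a, b⟩ : ℂ))).im := by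
  set z : ℂ := ⟨a, b⟩ with hzdef
  have hz : z ∈ Complex.integerComplement :=
    UpperHalfPlane.coe_mem_integerComplement ⟨z, hb⟩
  set f : ℤ → ℝ := fun k => b / ((a + (k : ℝ)) ^ 2 + b ^ 2) with hf
  have hfk : ∀ k : ℤ, (1 / (z + k)).im = - f k := by
    intro k
    simp only [hf, one_div, Complex.inv_im, Complex.normSq_apply, hzdef]
    simp
    ring
  have hf0 : ∀ k, 0 ≤ f k := fun k => by simp only [hf]; positivity
  have hs : Summable (fun n : ℕ => 1 / (z - (n + 1)) + 1 / (z + (n + 1))) :=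
    summable_cotTerm hz
  have hS := hs.hasSum
  rw [← cot_series_rep' hz] at hS
  have hI := (Complex.hasSum_im hS).neg
  have e : (fun n : ℕ => -(1 / (z - (n + 1)) + 1 / (z + (n + 1))).im) =
      fun n : ℕ => f (n + 1) + f (-(n + 1)) := by
    ext n
    have h1 := hfk (n + 1)
    have h2 := hfk (-(n + 1))
    push_cast at h1 h2
    rw [← sub_eq_add_neg] at h2
    rw [Complex.add_im, h1, h2]
    ring
  rw [e] at hI
  have s1 : Summable (fun n : ℕ => f (n + 1)) :=
    Summable.of_nonneg_of_le (fun n => hf0 _) (fun n => by linarith [hf0 (-(n + 1))]) hI.summable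
  have s2 : Summable (fun n : ℕ => f (-(n + 1))) :=
    Summable.of_nonneg_of_le (fun n => hf0 _) (fun n => by linarith [hf0 (n + 1)]) hI.summable
  have key := HasSum.of_add_one_of_neg_add_one s1.hasSum s2.hasSum
  have hu := (s1.hasSum.add s2.hasSum).unique hI
  have h0 := hfk 0
  simp only [Int.cast_zero, add_zero] at h0
  rw [key.tsum_eq]
  rw [Complex.sub_im, h0] at hu
  linarith

lemma cot_im_aux (A B : ℝ) (hB : 0 < B) :
    -(Complex.cot (⟨A, B⟩ : ℂ)).im =
      Real.cosh B / Real.sinh B * (1 / (1 + Real.sin A ^ 2 *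
        ((Real.cosh B / Real.sinh B) ^ 2 - 1))) := by
  have hs : 0 < Real.sinh B := Real.sinh_pos_iff.mpr hB
  have hz : (⟨A, B⟩ : ℂ) = A + B * Complex.I := Complex.mk_eq_add_mul_I A B
  have hc := Real.cosh_sq B
  have hsc := Real.sin_sq_add_cos_sq A
  have e1 : Complex.sin (⟨A, B⟩ : ℂ) =
      ⟨Real.sin A * Real.cosh B, Real.cos A * Real.sinh B⟩ := by
    rw [hz, Complex.sin_add_mul_I, Complex.mk_eq_add_mul_I]; push_cast; ring
  have e2 : Complex.cos (⟨A, B⟩ : ℂ) =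
      ⟨Real.cos A * Real.cosh B, -(Real.sin A * Real.sinh B)⟩ := by
    rw [hz, Complex.cos_add_mul_I, Complex.mk_eq_add_mul_I]; push_cast; ring
  rw [Complex.cot, e1, e2, Complex.div_im, Complex.normSq_apply]
  dsimp only
  have hd : Real.sin A * Real.cosh B * (Real.sin A * Real.cosh B) +
      Real.cos A * Real.sinh B * (Real.cos A * Real.sinh B) =
      Real.sinh B ^ 2 + Real.sin A ^ 2 := by
    linear_combination Real.sin A ^ 2 * hc + Real.sinh B ^ 2 * hsc
  have hr : 1 + Real.sin A ^ 2 * ((Real.cosh B / Real.sinh B) ^ 2 - 1) =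
      (Real.sinh B ^ 2 + Real.sin A ^ 2) / Real.sinh B ^ 2 := by
    rw [div_pow, hc]; field_simp; ring
  have hp : 0 < Real.sinh B ^ 2 + Real.sin A ^ 2 := by positivity
  rw [hd, hr]
  field_simp
  linear_combination hsc

/-- The closed form of the lattice sum of the exponential spectral density:
`∑_{k ∈ ℤ} θ/((ω + k/h)² + θ²) = πh coth(πθh) / (1 + sin²(πhω)(coth²(πθh) − 1))`,
where `coth t = cosh t / sinh t`. -/
theorem exponential_lattice_sum (θ h ω : ℝ) (hθ : 0 < θ) (hh : 0 < h) :
    (∑' k : ℤ, θ / ((ω + (k : ℝ) / h) ^ 2 + θ ^ 2))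
      = π * h * (Real.cosh (π * θ * h) / Real.sinh (π * θ * h)) *
          (1 / (1 + Real.sin (π * h * ω) ^ 2 *
            ((Real.cosh (π * θ * h) / Real.sinh (π * θ * h)) ^ 2 - 1))) := by
  have e : ∀ k : ℤ, θ / ((ω + (k : ℝ) / h) ^ 2 + θ ^ 2) =
      h * ((θ * h) / ((h * ω + (k : ℝ)) ^ 2 + (θ * h) ^ 2)) := by
    intro k
    have h2 : (h * ω + (k : ℝ)) ^ 2 + (θ * h) ^ 2 =
        h ^ 2 * ((ω + (k : ℝ) / h) ^ 2 + θ ^ 2) := by field_simp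
    have h3 : 0 < (ω + (k : ℝ) / h) ^ 2 + θ ^ 2 := by positivity
    rw [h2]
    generalize (ω + (k : ℝ) / h) ^ 2 + θ ^ 2 = D at *
    field_simp
  simp_rw [e]
  rw [tsum_mul_left, lattice_aux _ _ (by positivity)]
  have hz : (π : ℂ) * (⟨h * ω, θ * h⟩ : ℂ) = ⟨π * h * ω, π * θ * h⟩ := by
    apply Complex.ext <;> simp <;> ring
  have := cot_im_aux (π * h * ω) (π * θ * h) (by positivity)
  rw [hz, Complex.im_ofReal_mul]
  linear_combination h * π * this
end

section
/- For all real θ > 0 and h > 0: ∫_{−∞}^{∞} (θ² / (θ² + ω²)²) sin²(πωh) dω = −(π²h/2) (cosh(πθh) − sinh(πθh)) (cosh(πθh) − (1/(πθh) + 1) sinh(πθh)). -/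
open Real
open MeasureTheory Set Filter Topology FourierTransform

lemma aux_bound (s t : ℝ) (hs : 0 < s) (ht : 0 ≤ t) :
    (1 + s * t) * Real.exp (-(s * t)) ≤ 2 * Real.exp (-(s / 2) * t) := by
  have h1 := Real.add_one_le_exp (s * t / 2)
  have h2 : Real.exp (-(s / 2) * t) = Real.exp (s * t / 2) * Real.exp (-(s * t)) := by
    rw [← Real.exp_add]; congr 1; ring
  rw [h2, ← mul_assoc]
  have : 0 ≤ s * t := by positivity
  gcongr
  linarith

lemma aux_norm (s y t : ℝ) (hs : 0 < s) (ht : 0 ≤ t) :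
    ‖(1 + (s : ℂ) * t) * Complex.exp (-((s : ℂ) + y * Complex.I) * t)‖
      = (1 + s * t) * Real.exp (-(s * t)) := by
  rw [norm_mul, Complex.norm_exp]
  have h0 : 0 ≤ 1 + s * t := by positivity
  have : (1 + (s : ℂ) * t) = ((1 + s * t : ℝ) : ℂ) := by push_cast; ring
  rw [this, Complex.norm_of_nonneg h0]
  simp

lemma aux_int (s y : ℝ) (hs : 0 < s) :
    IntegrableOn (fun t : ℝ => (1 + (s : ℂ) * t) * Complex.exp (-((s : ℂ) + y * Complex.I) * t))
      (Ioi 0) := by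
  have := (integrableOn_exp_mul_Ioi (a := -(s / 2)) (by linarith) 0).const_mul 2
  refine Integrable.mono' this (by fun_prop) ?_
  refine (ae_restrict_iff' measurableSet_Ioi).2 (Eventually.of_forall fun t ht => ?_)
  rw [aux_norm s y t hs (le_of_lt ht)]
  exact aux_bound s t hs (le_of_lt ht)

lemma aux_val (s y : ℝ) (hs : 0 < s) :
    ∫ t in Ioi (0 : ℝ), (1 + (s : ℂ) * t) * Complex.exp (-((s : ℂ) + y * Complex.I) * t)
      = 1 / ((s : ℂ) + y * Complex.I) + s / ((s : ℂ) + y * Complex.I) ^ 2 := by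
  set c : ℂ := (s : ℂ) + y * Complex.I with hc
  have hc0 : c ≠ 0 := by
    intro h
    have := congrArg Complex.re h
    simp [hc] at this
    linarith
  have hexp : Tendsto (fun t : ℝ => Real.exp (-(s / 2) * t)) atTop (𝓝 0) := by
    refine Real.tendsto_exp_atBot.comp ?_
    exact tendsto_id.const_mul_atTop_of_neg (by linarith)
  have h2 : Tendsto (fun t : ℝ => 2 * Real.exp (-(s / 2) * t)) atTop (𝓝 0) := by
    simpa using hexp.const_mul 2
  have t1 : Tendsto (fun t : ℝ => (1 + (s : ℂ) * t) * Complex.exp (-c * t)) atTop (𝓝 0) := by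
    refine squeeze_zero_norm' ?_ h2
    filter_upwards [eventually_ge_atTop 0] with t ht
    rw [hc, aux_norm s y t hs ht]
    exact aux_bound s t hs ht
  have t2 : Tendsto (fun t : ℝ => Complex.exp (-c * t)) atTop (𝓝 0) := by
    refine squeeze_zero_norm' ?_ h2
    filter_upwards [eventually_ge_atTop 0] with t ht
    refine le_trans ?_ (aux_bound s t hs ht)
    rw [Complex.norm_exp]
    have : (-c * (t : ℂ)).re = -(s * t) := by simp [hc]
    rw [this]
    have : 0 ≤ s * t := by positivity
    have := Real.exp_pos (-(s * t))
    nlinarith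
  have := integral_Ioi_of_hasDerivAt_of_tendsto'
    (f := fun t : ℝ => -(1 / c) * ((1 + (s : ℂ) * t) * Complex.exp (-c * t))
      + -(s / c ^ 2) * Complex.exp (-c * t))
    (f' := fun t : ℝ => (1 + (s : ℂ) * t) * Complex.exp (-c * t)) (a := 0) (m := 0) ?_
    (aux_int s y hs) ?_
  · rw [this]; simp
    ring
  · intro t _
    have e : HasDerivAt (fun t : ℝ => Complex.exp (-c * t)) (Complex.exp (-c * t) * (-c * 1)) t :=
      ((Complex.ofRealCLM.hasDerivAt (x := t)).const_mul (-c)).cexp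
    have l : HasDerivAt (fun t : ℝ => 1 + (s : ℂ) * t) ((s : ℂ) * 1) t :=
      ((Complex.ofRealCLM.hasDerivAt (x := t)).const_mul (s : ℂ)).const_add 1
    convert! ((l.mul e).const_mul (-(1 / c))).add (e.const_mul (-(s / c ^ 2))) using 1
    field_simp
    ring
  · simpa using (t1.const_mul (-(1 / c))).add (t2.const_mul (-(s / c ^ 2)))

/-- The function with known Fourier transform. -/
noncomputable def auxF (s : ℝ) (t : ℝ) : ℂ := (((1 + s * |t|) * Real.exp (-(s * |t|)) : ℝ) : ℂ)

lemma auxF_cont (s : ℝ) : Continuous (auxF s) := by unfold auxF; fun_prop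

lemma pos_eq (s w t : ℝ) (ht : 0 < t) :
    Complex.exp (↑(-2 * π * t * w) * Complex.I) • auxF s t =
    (1 + (s : ℂ) * t) * Complex.exp (-((s : ℂ) + (2 * π * w : ℝ) * Complex.I) * t) := by
  have : -((s : ℂ) + (2 * π * w : ℝ) * Complex.I) * t
    = ↑(-2 * π * t * w) * Complex.I + ((-(s * t) : ℝ) : ℂ) := by push_cast; ring
  rw [this, Complex.exp_add, auxF, abs_of_pos ht, smul_eq_mul]
  push_cast; ring

lemma neg_eq (s w t : ℝ) (ht : 0 < t) :
    Complex.exp (↑(-2 * π * (-t) * w) * Complex.I) • auxF s (-t) =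
    (1 + (s : ℂ) * t) * Complex.exp (-((s : ℂ) + (-(2 * π * w) : ℝ) * Complex.I) * t) := by
  have := pos_eq s (-w) t ht
  rw [show -(2 * π * w) = 2 * π * (-w) by ring, ← this,
    show -2 * π * (-t) * w = -2 * π * t * (-w) by ring]
  simp [auxF]

lemma F_int' (s w : ℝ) (hs : 0 < s) :
    IntegrableOn (fun t : ℝ => Complex.exp (↑(-2 * π * t * w) * Complex.I) • auxF s t) (Iic 0) ∧
    IntegrableOn (fun t : ℝ => Complex.exp (↑(-2 * π * t * w) * Complex.I) • auxF s t) (Ioi 0) := by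
  constructor
  · rw [integrableOn_Iic_iff_integrableOn_Iio]
    have : IntegrableOn (fun t : ℝ => Complex.exp (↑(-2 * π * (-t) * w) * Complex.I) • auxF s (-t))
        (Ioi (-0)) := by
      rw [neg_zero]
      exact (aux_int s (-(2 * π * w)) hs).congr_fun (fun t ht => (neg_eq s w t ht).symm)
        measurableSet_Ioi
    simpa using this.comp_neg_Iio
  · exact (aux_int s (2 * π * w) hs).congr_fun (fun t ht => (pos_eq s w t ht).symm)
        measurableSet_Ioi

lemma F_int (s : ℝ) (hs : 0 < s) : Integrable (auxF s) := by
  have := F_int' s 0 hs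
  have h := this.1.union this.2
  rw [Iic_union_Ioi, integrableOn_univ] at h
  simpa using h

lemma F_fourier (θ w : ℝ) (hθ : 0 < θ) :
    𝓕 (auxF (2 * π * θ)) w = ((2 * θ ^ 3 / π / (θ ^ 2 + w ^ 2) ^ 2 : ℝ) : ℂ) := by
  have hs : 0 < 2 * π * θ := by positivity
  have hi := F_int' _ w hs
  rw [fourier_real_eq_integral_exp_smul, ← intervalIntegral.integral_Iic_add_Ioi hi.1 hi.2]
  rw [setIntegral_congr_fun measurableSet_Ioi (fun t ht => pos_eq _ w t ht), aux_val _ _ hs]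
  have h0 := integral_comp_neg_Ioi 0 (fun t : ℝ =>
    Complex.exp (↑(-2 * π * t * w) * Complex.I) • auxF (2 * π * θ) t)
  rw [neg_zero] at h0
  rw [← h0, setIntegral_congr_fun measurableSet_Ioi (fun t ht => neg_eq _ w t ht), aux_val _ _ hs]
  have hp : (π : ℂ) ≠ 0 := by exact_mod_cast pi_ne_zero
  have h1 : (θ : ℂ) + w * Complex.I ≠ 0 := by
    intro h
    have := congrArg Complex.re h
    simp at this
    linarith
  have h2 : (θ : ℂ) - w * Complex.I ≠ 0 := by
    intro h
    have := congrArg Complex.re h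
    simp at this
    linarith
  have e : (θ : ℂ) ^ 2 + w ^ 2 = (θ + w * Complex.I) * (θ - w * Complex.I) := by
    linear_combination ((w : ℂ) ^ 2) * Complex.I_sq
  push_cast
  rw [e, show (2 * π * θ + -(2 * π * w) * Complex.I : ℂ) = 2 * π * (θ - w * Complex.I) by ring,
    show (2 * π * θ + (2 * π * w) * Complex.I : ℂ) = 2 * π * (θ + w * Complex.I) by ring]
  generalize hA : (θ : ℂ) + w * Complex.I = A at *
  generalize hB : (θ : ℂ) - w * Complex.I = B at *
  have : (θ : ℂ) = (A + B) / 2 := by rw [← hA, ← hB]; ring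
  rw [this]
  field_simp
  ring

lemma base_int (θ : ℝ) (hθ : 0 < θ) : Integrable (fun w : ℝ => θ ^ 2 / (θ ^ 2 + w ^ 2) ^ 2) := by
  have h := (integrable_inv_one_add_sq.comp_mul_left' (inv_ne_zero hθ.ne')).const_mul (1 / θ ^ 2)
  refine h.mono' ?_ (Eventually.of_forall fun w => ?_)
  · refine Continuous.aestronglyMeasurable (Continuous.div (by fun_prop) (by fun_prop) fun w => ?_)
    positivity
  · rw [Real.norm_of_nonneg (by positivity)]
    have : 1 / θ ^ 2 * (1 + (θ⁻¹ * w) ^ 2)⁻¹ = 1 / (θ ^ 2 + w ^ 2) := by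
      field_simp
    rw [this, div_le_div_iff₀ (by positivity) (by positivity)]
    nlinarith [sq_nonneg w, sq_nonneg θ, mul_nonneg (sq_nonneg w) (sq_nonneg θ), sq_nonneg (w ^ 2)]

lemma cos_int (θ h : ℝ) (hθ : 0 < θ) (hh : 0 ≤ h) :
    ∫ w : ℝ, θ ^ 2 / (θ ^ 2 + w ^ 2) ^ 2 * Real.cos (2 * π * w * h)
      = π / (2 * θ) * ((1 + 2 * π * θ * h) * Real.exp (-(2 * π * θ * h))) := by
  have hs : 0 < 2 * π * θ := by positivity
  have hF : 𝓕 (auxF (2 * π * θ)) =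
      fun w => ((2 * θ / π * (θ ^ 2 / (θ ^ 2 + w ^ 2) ^ 2) : ℝ) : ℂ) := by
    ext w
    rw [F_fourier θ w hθ]
    congr 1
    field_simp
  have hFi : Integrable (𝓕 (auxF (2 * π * θ))) := by
    rw [hF]
    exact ((base_int θ hθ).const_mul _).ofReal
  have key := congrFun ((auxF_cont (2 * π * θ)).fourierInv_fourier_eq (F_int _ hs) hFi) h
  rw [fourierInv_eq', hF] at key
  have hI : Integrable (fun w : ℝ => Complex.exp (↑(2 * π * inner ℝ w h) * Complex.I) •
      ((2 * θ / π * (θ ^ 2 / (θ ^ 2 + w ^ 2) ^ 2) : ℝ) : ℂ)) := by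
    refine (((base_int θ hθ).const_mul (2 * θ / π)).ofReal (𝕜 := ℂ)).mono ?_
      (Eventually.of_forall fun w => ?_)
    · have hc : Continuous (fun w : ℝ => Complex.exp (↑(2 * π * inner ℝ w h) * Complex.I)) := by
        fun_prop
      exact hc.aestronglyMeasurable.smul
        (((base_int θ hθ).const_mul (2 * θ / π)).ofReal (𝕜 := ℂ)).aestronglyMeasurable
    · rw [norm_smul, Complex.norm_exp_ofReal_mul_I, one_mul]; rfl
  have k2 := congrArg Complex.re key
  have k3 := integral_re hI
  simp only [RCLike.re_eq_complex_re] at k3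
  rw [← k3] at k2
  have k4 : ∀ w : ℝ, (Complex.exp (↑(2 * π * inner ℝ w h) * Complex.I) •
      ((2 * θ / π * (θ ^ 2 / (θ ^ 2 + w ^ 2) ^ 2) : ℝ) : ℂ)).re =
      2 * θ / π * (θ ^ 2 / (θ ^ 2 + w ^ 2) ^ 2 * Real.cos (2 * π * w * h)) := by
    intro w
    rw [smul_eq_mul, Complex.re_mul_ofReal, Complex.exp_ofReal_mul_I_re]
    have : inner ℝ w h = w * h := by simp [mul_comm]
    rw [this, ← mul_assoc (2 * π)]
    ring
  simp_rw [k4] at k2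
  rw [integral_const_mul, auxF, Complex.ofReal_re, abs_of_nonneg hh] at k2
  rw [← k2]
  generalize (∫ w : ℝ, θ ^ 2 / (θ ^ 2 + w ^ 2) ^ 2 * Real.cos (2 * π * w * h)) = J
  field_simp

/-- The integral formula used in the proof of Corollary 1:
`∫ℝ (θ²/(θ² + ω²)²) sin²(πωh) dω
  = −(π²h/2)(cosh(πθh) − sinh(πθh))(cosh(πθh) − (1/(πθh) + 1) sinh(πθh))`. -/
theorem sin_sq_integral (θ h : ℝ) (hθ : 0 < θ) (hh : 0 < h) :
    (∫ ω : ℝ, (θ ^ 2 / (θ ^ 2 + ω ^ 2) ^ 2) * Real.sin (π * ω * h) ^ 2)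
      = -(π ^ 2 * h / 2) * (Real.cosh (π * θ * h) - Real.sinh (π * θ * h)) *
          (Real.cosh (π * θ * h) - (1 / (π * θ * h) + 1) * Real.sinh (π * θ * h)) := by
  have c0 := cos_int θ 0 hθ le_rfl
  have c1 := cos_int θ h hθ hh.le
  have i0 := base_int θ hθ
  have i1 : Integrable (fun w : ℝ => θ ^ 2 / (θ ^ 2 + w ^ 2) ^ 2 * Real.cos (2 * π * w * h)) := by
    refine i0.mono (i0.aestronglyMeasurable.mul (by fun_prop)) (Eventually.of_forall fun w => ?_)
    rw [norm_mul]
    exact mul_le_of_le_one_right (norm_nonneg _) (Real.abs_cos_le_one _)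
  have e : ∀ ω : ℝ, (θ ^ 2 / (θ ^ 2 + ω ^ 2) ^ 2) * Real.sin (π * ω * h) ^ 2 =
      1 / 2 * (θ ^ 2 / (θ ^ 2 + ω ^ 2) ^ 2
        - θ ^ 2 / (θ ^ 2 + ω ^ 2) ^ 2 * Real.cos (2 * π * ω * h)) := by
    intro ω
    rw [Real.sin_sq_eq_half_sub, show 2 * (π * ω * h) = 2 * π * ω * h by ring]
    ring
  simp_rw [e]
  rw [integral_const_mul, integral_sub i0 i1, c1]
  simp at c0
  rw [c0, Real.cosh_sub_sinh, Real.cosh_eq, Real.sinh_eq,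
    show -(2 * π * θ * h) = -(π * θ * h) + -(π * θ * h) by ring, Real.exp_add, Real.exp_neg]
  have := Real.exp_pos (π * θ * h)
  generalize Real.exp (π * θ * h) = E at *
  field_simp
  ring
end

section
/- Let F_θ(ω) = θ/(θ² + ω²) for θ > 0 and ω ∈ ℝ. Then there exist constants C > 0 and ε > 0 such that for all θ > 0 and h > 0 with θh < ε: | σ_h²(F_θ) − (2π²/3) θh | ≤ C (θh)². In particular σ_h²(F_θ) = (2π²/3) θh + O((θh)²) as θh → 0. -/
open MeasureTheory Real

/-- The optimal mean integrated interpolation error for a stationary Gaussian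
process with spectral density `F` observed on the grid `hℤ`:
`σ_h²(F) = ∫ℝ F(ω) (∑_{k ≠ 0} F(ω + k/h)) / (∑_{k ∈ ℤ} F(ω + k/h)) dω`.
(Division by zero is `0` in Lean, so the integrand is `0` where the denominator
vanishes, as in the convention of the paper.) -/
noncomputable def sigmaSq (h : ℝ) (F : ℝ → ℝ) : ℝ :=
  ∫ ω : ℝ, F ω * (∑' k : {k : ℤ // k ≠ 0}, F (ω + (k.1 : ℝ) / h)) /
    (∑' k : ℤ, F (ω + (k : ℝ) / h))


lemma aux_cot_im (X Y : ℝ) (hY : 0 < Y) :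
    (Complex.cot ((X : ℂ) + Y * Complex.I)).im
      = - (Real.sinh (2 * Y) / (Real.cosh (2 * Y) - Real.cos (2 * X))) := by
  have hs : 0 < Real.sinh Y := Real.sinh_pos_iff.mpr hY
  have h1 : Complex.cos ((X : ℂ) + Y * Complex.I)
      = ⟨Real.cos X * Real.cosh Y, - (Real.sin X * Real.sinh Y)⟩ := by
    rw [Complex.cos_add_mul_I]
    apply Complex.ext <;> simp [← Complex.ofReal_cos, ← Complex.ofReal_sin, ← Complex.ofReal_cosh, ← Complex.ofReal_sinh]
  have h2 : Complex.sin ((X : ℂ) + Y * Complex.I)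
      = ⟨Real.sin X * Real.cosh Y, Real.cos X * Real.sinh Y⟩ := by
    rw [Complex.sin_add_mul_I]
    apply Complex.ext <;> simp [← Complex.ofReal_cos, ← Complex.ofReal_sin, ← Complex.ofReal_cosh, ← Complex.ofReal_sinh]
  rw [Complex.cot_eq_cos_div_sin, h1, h2, Complex.div_im]
  simp only [Complex.normSq_mk]
  have e1 : Real.sin X * Real.cosh Y * (Real.sin X * Real.cosh Y) +
      Real.cos X * Real.sinh Y * (Real.cos X * Real.sinh Y) = Real.sinh Y ^ 2 + Real.sin X ^ 2 := by
    have := Real.cosh_sq Y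
    have := Real.sin_sq_add_cos_sq X
    have h3 : Real.cos X ^ 2 = 1 - Real.sin X ^ 2 := by linarith
    calc _ = Real.sin X ^ 2 * Real.cosh Y ^ 2 + Real.cos X ^ 2 * Real.sinh Y ^ 2 := by ring
      _ = _ := by rw [Real.cosh_sq, h3]; ring
  have e2 : Real.cosh (2 * Y) - Real.cos (2 * X) = 2 * (Real.sinh Y ^ 2 + Real.sin X ^ 2) := by
    rw [Real.cosh_two_mul, Real.cos_two_mul, Real.cosh_sq]
    have := Real.sin_sq_add_cos_sq X
    linarith
  have hp : 0 < Real.sinh Y ^ 2 + Real.sin X ^ 2 := by positivity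
  rw [e1, e2, Real.sinh_two_mul]
  have := Real.sin_sq_add_cos_sq X
  field_simp
  linarith

lemma aux_hasSum (a x : ℝ) (ha : 0 < a) :
    HasSum (fun k : ℤ => a / (a ^ 2 + (x + k) ^ 2))
      (π * (Real.sinh (2 * π * a) / (Real.cosh (2 * π * a) - Real.cos (2 * π * x)))) := by
  set z : ℂ := ⟨x, a⟩ with hz
  have hzc : z ∈ Complex.integerComplement :=
    UpperHalfPlane.coe_mem_integerComplement ⟨z, by simpa [hz] using ha⟩
  have hsum : HasSum (fun n : ℕ => (1 / (z - (n + 1)) + 1 / (z + (n + 1))))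
      (π * Complex.cot (π * z) - 1 / z) := by
    rw [cot_series_rep' hzc]
    exact (summable_cotTerm hzc).hasSum
  have him := ((Complex.hasSum_iff _ _).1 hsum).2
  have key : ∀ t : ℝ, (1 / (z + t)).im = - (a / (a ^ 2 + (x + t) ^ 2)) := by
    intro t
    simp [Complex.inv_im, Complex.normSq_apply, hz]
    ring
  have hneg := him.neg
  have h3 : ∀ n : ℕ, -((1 / (z - (n + 1)) + 1 / (z + (n + 1))).im)
      = a / (a ^ 2 + (x + ((n : ℝ) + 1)) ^ 2) + a / (a ^ 2 + (x + -((n : ℝ) + 1)) ^ 2) := by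
    intro n
    have k1 := key ((n : ℝ) + 1)
    have k2 := key (-((n : ℝ) + 1))
    push_cast at k1 k2
    rw [← sub_eq_add_neg] at k2
    rw [Complex.add_im, k1, k2, ← sub_eq_add_neg]; ring
  simp_rw [h3] at hneg
  have s1 : Summable (fun n : ℕ => a / (a ^ 2 + (x + ((n : ℝ) + 1)) ^ 2)) :=
    Summable.of_nonneg_of_le (fun n => by positivity)
      (fun n => le_add_of_nonneg_right (by positivity)) hneg.summable
  have s2 : Summable (fun n : ℕ => a / (a ^ 2 + (x + -((n : ℝ) + 1)) ^ 2)) :=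
    Summable.of_nonneg_of_le (fun n => by positivity)
      (fun n => le_add_of_nonneg_left (by positivity)) hneg.summable
  have hval := hneg.unique (s1.hasSum.add s2.hasSum)
  have := HasSum.of_add_one_of_neg_add_one (f := fun k : ℤ => a / (a ^ 2 + (x + k) ^ 2))
    (m := ∑' n : ℕ, a / (a ^ 2 + (x + ((n : ℝ) + 1)) ^ 2))
    (m' := ∑' n : ℕ, a / (a ^ 2 + (x + -((n : ℝ) + 1)) ^ 2))
    (by push_cast; exact s1.hasSum) (by push_cast; exact s2.hasSum)
  convert this using 1
  have k0 := key 0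
  have hc := aux_cot_im (π * x) (π * a) (by positivity)
  have hw : (π : ℂ) * z = ((π * x : ℝ) : ℂ) + ((π * a : ℝ) : ℂ) * Complex.I := by
    apply Complex.ext <;> simp [hz]
  rw [← hw] at hc
  rw [Complex.sub_im, Complex.im_ofReal_mul, hc] at hval
  simp only [Complex.ofReal_zero, add_zero] at k0
  rw [k0] at hval
  rw [show 2 * π * a = 2 * (π * a) by ring, show 2 * π * x = 2 * (π * x) by ring]
  simp only [Int.cast_zero, add_zero]
  linarith

lemma aux_tendsto (u c d : ℝ) (hu : 0 < u) :
    Filter.Tendsto (fun t : ℝ => (c + d * t) * rexp (-u * t)) Filter.atTop (nhds 0) := by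
  have h0 := tendsto_rpow_mul_exp_neg_mul_atTop_nhds_zero 0 u hu
  have h1 := tendsto_rpow_mul_exp_neg_mul_atTop_nhds_zero 1 u hu
  have := (h0.const_mul c).add (h1.const_mul d)
  simp only [Real.rpow_zero, Real.rpow_one, mul_zero, add_zero] at this
  refine this.congr (fun t => by ring)

lemma aux_integrableOn (u : ℝ) (hu : 0 < u) :
    IntegrableOn (fun t : ℝ => (1 + u * t) * rexp (-u * t)) (Set.Ioi 0) := by
  have hd : ∀ t : ℝ, HasDerivAt (fun t : ℝ => (-(2 / u) + (-1) * t) * rexp (-u * t))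
      ((1 + u * t) * rexp (-u * t)) t := by
    intro t
    have h1 : HasDerivAt (fun t : ℝ => -(2 / u) + (-1) * t) (-1) t := by
      simpa using ((hasDerivAt_id t).const_mul (-1 : ℝ)).const_add (-(2 / u))
    have h2 : HasDerivAt (fun t : ℝ => rexp (-u * t)) (rexp (-u * t) * (-u)) t := by
      simpa using ((hasDerivAt_id t).const_mul (-u)).exp
    refine (h1.mul h2).congr_deriv ?_
    field_simp
    ring
  refine integrableOn_Ioi_deriv_of_nonneg (hd 0).continuousAt.continuousWithinAt
    (fun t _ => hd t) (fun t ht => ?_) (aux_tendsto u _ _ hu)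
  have : (0:ℝ) < t := ht
  positivity

lemma aux_half_s10 (u y : ℝ) (hu : 0 < u) (z : ℂ) (hz : z = ⟨u, y⟩) :
    IntegrableOn (fun t : ℝ => (1 + u * t : ℂ) * Complex.exp (-z * t)) (Set.Ioi 0) ∧
    ∫ t in Set.Ioi (0:ℝ), (1 + u * t : ℂ) * Complex.exp (-z * t) = 1 / z + u / z ^ 2 := by
  have hz0 : z ≠ 0 := by
    intro h; rw [hz] at h; have := congrArg Complex.re h; simp at this; exact hu.ne' this
  have hnorm : ∀ t : ℝ, ‖Complex.exp (-z * t)‖ = rexp (-u * t) := by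
    intro t; rw [Complex.norm_exp]; simp [hz]
  have hint : IntegrableOn (fun t : ℝ => (1 + u * t : ℂ) * Complex.exp (-z * t)) (Set.Ioi 0) := by
    refine Integrable.mono' (aux_integrableOn u hu)
      (by apply Continuous.aestronglyMeasurable; fun_prop) ?_
    refine (ae_restrict_iff' measurableSet_Ioi).2 (Filter.Eventually.of_forall fun t ht => ?_)
    have ht' : (0:ℝ) < t := ht
    rw [norm_mul, hnorm]
    gcongr
    rw [show (1 + u * t : ℂ) = ((1 + u * t : ℝ) : ℂ) by push_cast; ring, Complex.norm_real,
      Real.norm_of_nonneg (by positivity)]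
  refine ⟨hint, ?_⟩
  have hd : ∀ t : ℝ, HasDerivAt
      (fun t : ℝ => (-(1 / z + u / z ^ 2) + (-(u / z)) * (t : ℂ)) * Complex.exp (-z * t))
      ((1 + u * t : ℂ) * Complex.exp (-z * t)) t := by
    intro t
    have h0 : HasDerivAt (fun t : ℝ => (t : ℂ)) 1 t := Complex.ofRealCLM.hasDerivAt
    have h1 := (h0.const_mul (-((u : ℂ) / z))).const_add (-(1 / z + u / z ^ 2))
    have h2 := (h0.const_mul (-z)).cexp
    refine (h1.mul h2).congr_deriv ?_
    field_simp
    ring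
  have ht : Filter.Tendsto
      (fun t : ℝ => (-(1 / z + u / z ^ 2) + (-(u / z)) * (t : ℂ)) * Complex.exp (-z * t))
      Filter.atTop (nhds 0) := by
    refine squeeze_zero_norm' ?_
      (aux_tendsto u (‖-(1 / z + u / z ^ 2)‖) (‖-((u : ℂ) / z)‖) hu)
    filter_upwards [Filter.eventually_ge_atTop 0] with t ht
    rw [norm_mul, hnorm]
    gcongr
    refine (norm_add_le _ _).trans ?_
    rw [norm_mul, Complex.norm_real, Real.norm_of_nonneg ht]
  rw [integral_Ioi_of_hasDerivAt_of_tendsto (hd 0).continuousAt.continuousWithinAt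
    (fun t _ => hd t) hint ht]
  simp

noncomputable def auxK (u : ℝ) (t : ℝ) : ℂ := (1 + u * |t| : ℝ) * (rexp (-u * |t|) : ℝ)

lemma auxK_cont (u : ℝ) : Continuous (auxK u) := by unfold auxK; fun_prop

lemma aux_neg (f : ℝ → ℂ) (h : IntegrableOn (fun t => f (-t)) (Set.Ioi 0)) :
    IntegrableOn f (Set.Iic 0) := by
  rw [integrableOn_Iic_iff_integrableOn_Iio]
  have := IntegrableOn.comp_neg_Iio (c := 0) (f := fun t => f (-t)) (by simpa using h)
  simpa only [neg_neg] using this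

lemma aux_fourier_pieces (u w : ℝ) (hu : 0 < u) :
    Integrable (fun t : ℝ => Complex.exp (↑(-2 * π * t * w) * Complex.I) * auxK u t) ∧
    ∫ t : ℝ, Complex.exp (↑(-2 * π * t * w) * Complex.I) * auxK u t
      = ((4 * u ^ 3 / (u ^ 2 + (2 * π * w) ^ 2) ^ 2 : ℝ) : ℂ) := by
  set f := fun t : ℝ => Complex.exp (↑(-2 * π * t * w) * Complex.I) * auxK u t with hf
  set z1 : ℂ := ⟨u, 2 * π * w⟩ with hz1
  set z2 : ℂ := ⟨u, -(2 * π * w)⟩ with hz2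
  obtain ⟨i1, v1⟩ := aux_half_s10 u (2 * π * w) hu z1 rfl
  obtain ⟨i2, v2⟩ := aux_half_s10 u (-(2 * π * w)) hu z2 rfl
  have e1' : z1 = u + (2 * π * w) * Complex.I := by apply Complex.ext <;> simp [hz1]
  have e2' : z2 = u - (2 * π * w) * Complex.I := by apply Complex.ext <;> simp [hz2]
  have e1 : Set.EqOn f (fun t : ℝ => (1 + u * t : ℂ) * Complex.exp (-z1 * t)) (Set.Ioi 0) := by
    intro t ht
    simp only [hf, auxK, abs_of_pos (show (0:ℝ) < t from ht)]
    rw [Complex.ofReal_exp, mul_left_comm, ← Complex.exp_add, e1']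
    push_cast
    congr 2; ring
  have e2 : Set.EqOn (fun t => f (-t)) (fun t : ℝ => (1 + u * t : ℂ) * Complex.exp (-z2 * t))
      (Set.Ioi 0) := by
    intro t ht
    simp only [hf, auxK, abs_neg, abs_of_pos (show (0:ℝ) < t from ht)]
    rw [Complex.ofReal_exp, mul_left_comm, ← Complex.exp_add, e2']
    push_cast
    congr 2; ring
  have j1 : IntegrableOn f (Set.Ioi 0) := i1.congr_fun e1.symm measurableSet_Ioi
  have j2 : IntegrableOn (fun t => f (-t)) (Set.Ioi 0) := i2.congr_fun e2.symm measurableSet_Ioi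
  have j3 : IntegrableOn f (Set.Iic 0) := aux_neg f j2
  refine ⟨?_, ?_⟩
  · have := j3.union j1
    rwa [Set.Iic_union_Ioi, integrableOn_univ] at this
  · rw [← intervalIntegral.integral_Iic_add_Ioi j3 j1]
    have h3 : ∫ t in Set.Iic (0:ℝ), f t = ∫ t in Set.Ioi (0:ℝ), f (-t) := by
      rw [integral_comp_neg_Ioi]; simp
    rw [h3, setIntegral_congr_fun measurableSet_Ioi e1, setIntegral_congr_fun measurableSet_Ioi e2,
      v1, v2]
    have hN : z1 * z2 = ((u ^ 2 + (2 * π * w) ^ 2 : ℝ) : ℂ) := by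
      rw [e1', e2']; push_cast; ring_nf; rw [Complex.I_sq]; ring
    have hN0 : z1 * z2 ≠ 0 := by
      rw [hN]; exact_mod_cast (by positivity : u ^ 2 + (2 * π * w) ^ 2 ≠ 0)
    have hS : z1 + z2 = 2 * u := by rw [e1', e2']; ring
    have a1 := left_ne_zero_of_mul hN0
    have a2 := right_ne_zero_of_mul hN0
    rw [show ((4 * u ^ 3 / (u ^ 2 + (2 * π * w) ^ 2) ^ 2 : ℝ) : ℂ) = 4 * u ^ 3 / (z1 * z2) ^ 2 by
      rw [hN]; push_cast; ring]
    have hu' : (u : ℂ) = (z1 + z2) / 2 := by rw [hS]; ring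
    rw [hu']
    field_simp
    ring

lemma aux_int1 (a : ℝ) (ha : 0 < a) :
    Integrable (fun x : ℝ => a / (a ^ 2 + x ^ 2)) ∧ ∫ x : ℝ, a / (a ^ 2 + x ^ 2) = π := by
  have e : (fun x : ℝ => a / (a ^ 2 + x ^ 2)) = fun x => a⁻¹ * (1 + (x / a) ^ 2)⁻¹ := by
    ext x; field_simp
  rw [e]
  refine ⟨(integrable_inv_one_add_sq.comp_div ha.ne').const_mul _, ?_⟩
  rw [integral_const_mul, Measure.integral_comp_div (fun x : ℝ => (1 + x ^ 2)⁻¹),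
    integral_univ_inv_one_add_sq, abs_of_pos ha, smul_eq_mul]
  field_simp

lemma aux_int2 (a : ℝ) (ha : 0 < a) :
    Integrable (fun x : ℝ => (a / (a ^ 2 + x ^ 2)) ^ 2) := by
  refine ((aux_int1 a ha).1.const_mul (1 / a)).mono'
    (by apply Continuous.aestronglyMeasurable
        exact Continuous.pow (Continuous.div (by fun_prop) (by fun_prop)
          (fun x => by positivity)) 2) (Filter.Eventually.of_forall fun x => ?_)
  rw [Real.norm_of_nonneg (by positivity), sq]
  refine mul_le_mul_of_nonneg_right ?_ (by positivity)
  rw [div_le_div_iff₀ (by positivity) ha]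
  nlinarith [sq_nonneg x]

open FourierTransform in
lemma aux_inversion (a v : ℝ) (ha : 0 < a) :
    ∫ x : ℝ, (a / (a ^ 2 + x ^ 2)) ^ 2 * Real.cos (2 * π * x * v)
      = π / (2 * a) * ((1 + 2 * π * a * |v|) * rexp (-(2 * π * a) * |v|)) := by
  have hu : 0 < 2 * π * a := by positivity
  have hF : 𝓕 (auxK (2 * π * a)) = fun w : ℝ =>
      ((2 * a / π * (a / (a ^ 2 + w ^ 2)) ^ 2 : ℝ) : ℂ) := by
    ext w
    rw [Real.fourier_real_eq_integral_exp_smul]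
    simp only [smul_eq_mul]
    rw [(aux_fourier_pieces (2 * π * a) w hu).2]
    congr 1
    have := pi_pos
    have : a ^ 2 + w ^ 2 ≠ 0 := by positivity
    rw [show (2 * π * a) ^ 2 + (2 * π * w) ^ 2 = 4 * π ^ 2 * (a ^ 2 + w ^ 2) by ring]
    field_simp
    ring
  have hK : Integrable (auxK (2 * π * a)) := by
    simpa using (aux_fourier_pieces (2 * π * a) 0 hu).1
  have hFi : Integrable (𝓕 (auxK (2 * π * a))) := by
    rw [hF]
    exact ((aux_int2 a ha).const_mul _).ofReal
  have hinv := congrFun ((auxK_cont (2 * π * a)).fourierInv_fourier_eq hK hFi) v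
  rw [Real.fourierInv_eq', hF] at hinv
  have hre := congrArg Complex.re hinv
  have hint : Integrable (fun x : ℝ => Complex.exp (↑(2 * π * inner ℝ x v) * Complex.I) •
      ((2 * a / π * (a / (a ^ 2 + x ^ 2)) ^ 2 : ℝ) : ℂ)) := by
    refine (((aux_int2 a ha).const_mul (2 * a / π)).ofReal (𝕜 := ℂ)).norm.mono'
      ?_ (Filter.Eventually.of_forall fun x => ?_)
    · simp only [smul_eq_mul]
      refine AEStronglyMeasurable.mul ?_
        (((aux_int2 a ha).const_mul (2 * a / π)).ofReal (𝕜 := ℂ)).aestronglyMeasurable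
      apply Continuous.aestronglyMeasurable
      fun_prop
    · rw [norm_smul, Complex.norm_exp_ofReal_mul_I, one_mul]
      exact le_rfl
  have hre2 : (∫ x : ℝ, Complex.exp (↑(2 * π * inner ℝ x v) * Complex.I) •
      ((2 * a / π * (a / (a ^ 2 + x ^ 2)) ^ 2 : ℝ) : ℂ)).re
      = ∫ x : ℝ, 2 * a / π * ((a / (a ^ 2 + x ^ 2)) ^ 2 * Real.cos (2 * π * x * v)) := by
    have := integral_re (𝕜 := ℂ) hint
    refine Eq.trans this.symm (integral_congr_ae (Filter.Eventually.of_forall fun x => ?_))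
    change (_ : ℂ).re = _
    rw [smul_eq_mul, Complex.re_mul_ofReal, Complex.exp_ofReal_mul_I_re]
    simp only [RCLike.inner_apply, conj_trivial]
    rw [show 2 * π * (v * x) = 2 * π * x * v by ring]
    ring
  rw [hre2, integral_const_mul, auxK, ← Complex.ofReal_mul, Complex.ofReal_re] at hre
  rw [← hre]
  have := pi_pos
  generalize (∫ x : ℝ, (a / (a ^ 2 + x ^ 2)) ^ 2 * Real.cos (2 * π * x * v)) = J
  field_simp

lemma aux_sigma (θ h : ℝ) (hθ : 0 < θ) (hh : 0 < h) :
    sigmaSq h (fun ω => θ / (θ ^ 2 + ω ^ 2)) =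
      π - π * (Real.sinh (2 * π * (θ * h)) - 2 * π * (θ * h) * rexp (-(2 * π * (θ * h))))
        / (2 * π * (θ * h) * Real.sinh (2 * π * (θ * h))) := by
  set a := θ * h with hadef
  have ha : 0 < a := by positivity
  set s := Real.sinh (2 * π * a) with hsdef
  have hs : 0 < s := Real.sinh_pos_iff.mpr (by positivity)
  have hF : ∀ x : ℝ, θ / (θ ^ 2 + (x / h) ^ 2) = h * (a / (a ^ 2 + x ^ 2)) := by
    intro x; rw [hadef]; field_simp
  have hcosh : ∀ x : ℝ, 0 < Real.cosh (2 * π * a) - Real.cos (2 * π * x) := by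
    intro x
    have := Real.one_lt_cosh.2 (show 2 * π * a ≠ 0 by positivity)
    have := Real.cos_le_one (2 * π * x)
    linarith
  have hinteg : ∀ x : ℝ, (fun ω : ℝ => (θ / (θ ^ 2 + ω ^ 2)) *
      (∑' k : {k : ℤ // k ≠ 0}, θ / (θ ^ 2 + (ω + (k.1 : ℝ) / h) ^ 2)) /
      (∑' k : ℤ, θ / (θ ^ 2 + (ω + (k : ℝ) / h) ^ 2))) (x / h) =
      h * (a / (a ^ 2 + x ^ 2) - (π * s)⁻¹ * (Real.cosh (2 * π * a) * (a / (a ^ 2 + x ^ 2)) ^ 2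
        - (a / (a ^ 2 + x ^ 2)) ^ 2 * Real.cos (2 * π * x * 1))) := by
    intro x
    have hS := (aux_hasSum a x ha)
    have h1 : ∀ k : ℤ, θ / (θ ^ 2 + (x / h + (k : ℝ) / h) ^ 2)
        = h * (a / (a ^ 2 + (x + k) ^ 2)) := by
      intro k; rw [← add_div, hF]
    simp only [h1, hF, tsum_mul_left]
    have hsplit := hS.summable.tsum_subtype_add_tsum_subtype_compl {0}
    rw [tsum_singleton (0 : ℤ) (fun k : ℤ => a / (a ^ 2 + (x + k) ^ 2)), hS.tsum_eq] at hsplit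
    have hsub : (∑' k : {k : ℤ // k ≠ 0}, a / (a ^ 2 + (x + (k.1 : ℝ)) ^ 2))
        = π * (s / (Real.cosh (2 * π * a) - Real.cos (2 * π * x))) - a / (a ^ 2 + x ^ 2) := by
      simp only [Int.cast_zero, add_zero] at hsplit
      rw [hsdef, ← hsplit, add_sub_cancel_left]
      rfl
    rw [hsub, hS.tsum_eq]
    have h3 := (hcosh x).ne'
    have := pi_pos
    have h4 : a ^ 2 + x ^ 2 ≠ 0 := by positivity
    rw [mul_one, ← hsdef]
    generalize Real.cosh (2 * π * a) = c at *
    generalize Real.cos (2 * π * x) = d at *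
    generalize a / (a ^ 2 + x ^ 2) = g at *
    field_simp
  have hchg := Measure.integral_comp_div (fun ω : ℝ => (θ / (θ ^ 2 + ω ^ 2)) *
      (∑' k : {k : ℤ // k ≠ 0}, θ / (θ ^ 2 + (ω + (k.1 : ℝ) / h) ^ 2)) /
      (∑' k : ℤ, θ / (θ ^ 2 + (ω + (k : ℝ) / h) ^ 2))) h
  simp only [hinteg] at hchg
  rw [integral_const_mul, abs_of_pos hh, smul_eq_mul] at hchg
  have hchg2 := mul_left_cancel₀ hh.ne' hchg
  unfold sigmaSq
  rw [← hchg2]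
  have i1 := (aux_int1 a ha).1
  have i2 := aux_int2 a ha
  have i3 : Integrable (fun x : ℝ => (a / (a ^ 2 + x ^ 2)) ^ 2 * Real.cos (2 * π * x * 1)) := by
    refine i2.mono' (i2.aestronglyMeasurable.mul
      (by apply Continuous.aestronglyMeasurable; fun_prop)) (Filter.Eventually.of_forall fun x => ?_)
    rw [norm_mul, Real.norm_of_nonneg (by positivity)]
    exact mul_le_of_le_one_right (by positivity) (Real.abs_cos_le_one _)
  have i4 : Integrable (fun x : ℝ => (π * s)⁻¹ * (Real.cosh (2 * π * a) *
      (a / (a ^ 2 + x ^ 2)) ^ 2 - (a / (a ^ 2 + x ^ 2)) ^ 2 * Real.cos (2 * π * x * 1))) :=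
    ((i2.const_mul _).sub i3).const_mul _
  rw [integral_sub i1 i4, integral_const_mul,
    integral_sub (i2.const_mul _) i3, integral_const_mul, (aux_int1 a ha).2, aux_inversion a 1 ha]
  have h0 := aux_inversion a 0 ha
  simp only [mul_zero, Real.cos_zero, mul_one, abs_zero, add_zero, Real.exp_zero] at h0
  rw [h0]
  have hc : Real.cosh (2 * π * a) = s + rexp (-(2 * π * a)) := by
    rw [hsdef, Real.cosh_eq, Real.sinh_eq]; ring
  rw [hc]
  have := pi_pos
  simp only [abs_one, mul_one]
  congr 1
  generalize rexp (-(2 * π * a)) = E at *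
  field_simp
  ring

lemma aux_asymp (u : ℝ) (hu : 0 < u) (hu1 : u ≤ 1) :
    |u * Real.sinh u - Real.sinh u + u * rexp (-u) - u ^ 2 / 3 * Real.sinh u| ≤ u ^ 4 := by
  have b1 := Real.exp_bound (x := u) (by rw [abs_of_pos hu]; exact hu1) (n := 4) (by norm_num)
  have b2 := Real.exp_bound (x := -u) (by rw [abs_neg, abs_of_pos hu]; exact hu1) (n := 4)
    (by norm_num)
  rw [abs_neg] at b2
  rw [abs_of_pos hu] at b1 b2
  simp only [Finset.sum_range_succ, Finset.sum_range_zero, Nat.factorial] at b1 b2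
  norm_num at b1 b2
  obtain ⟨e1, he1⟩ : ∃ e, e = rexp u - (1 + u + u ^ 2 / 2 + u ^ 3 / 6) := ⟨_, rfl⟩
  obtain ⟨e2, he2⟩ : ∃ e, e = rexp (-u) - (1 - u + u ^ 2 / 2 - u ^ 3 / 6) := ⟨_, rfl⟩
  have c1 : |e1| ≤ u ^ 4 * (5 / 96) := by rw [he1]; exact b1
  have c2 : |e2| ≤ u ^ 4 * (5 / 96) := by
    rw [he2]; convert b2 using 2; ring
  have key : u * Real.sinh u - Real.sinh u + u * rexp (-u) - u ^ 2 / 3 * Real.sinh u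
      = -(u ^ 5 / 18) + (u - 1 - u ^ 2 / 3) * ((e1 - e2) / 2) + u * e2 := by
    rw [Real.sinh_eq, show rexp u = e1 + (1 + u + u ^ 2 / 2 + u ^ 3 / 6) by rw [he1]; ring,
      show rexp (-u) = e2 + (1 - u + u ^ 2 / 2 - u ^ 3 / 6) by rw [he2]; ring]
    ring
  rw [key]
  have d1 : |-(u ^ 5 / 18)| ≤ u ^ 4 / 18 := by
    rw [abs_neg, abs_of_pos (by positivity)]
    have : u ^ 5 ≤ u ^ 4 := pow_le_pow_of_le_one hu.le hu1 (by norm_num)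
    linarith
  have d2 : |(u - 1 - u ^ 2 / 3) * ((e1 - e2) / 2)| ≤ 2 * (u ^ 4 * (5 / 96)) := by
    rw [abs_mul]
    refine mul_le_mul ?_ ?_ (abs_nonneg _) (by norm_num)
    · rw [abs_le]; constructor <;> nlinarith
    · rw [abs_le] at *; constructor <;> linarith
  have d3 : |u * e2| ≤ 1 * (u ^ 4 * (5 / 96)) := by
    rw [abs_mul, abs_of_pos hu]
    exact mul_le_mul hu1 c2 (abs_nonneg _) (by norm_num)
  have := abs_add_three (-(u ^ 5 / 18)) ((u - 1 - u ^ 2 / 3) * ((e1 - e2) / 2)) (u * e2)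
  have : 0 < u ^ 4 := by positivity
  linarith

/-- Corollary 1: for the exponential spectral density `F_θ(ω) = θ/(θ² + ω²)` the
interpolation error satisfies `σ_h²(F_θ) = (2π²/3)θh + O((θh)²)` as `θh → 0`:
there are constants `C > 0` and `ε > 0` such that for all `θ, h > 0` with
`θh < ε` one has `|σ_h²(F_θ) − (2π²/3)θh| ≤ C(θh)²`. -/
theorem exponential_error_asymptotics :
    ∃ C > (0 : ℝ), ∃ ε > (0 : ℝ), ∀ θ h : ℝ, 0 < θ → 0 < h → θ * h < ε →
      |sigmaSq h (fun ω => θ / (θ ^ 2 + ω ^ 2)) - (2 * π ^ 2 / 3) * (θ * h)|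
        ≤ C * (θ * h) ^ 2 := by
  have hπ := pi_pos
  refine ⟨π * (2 * π) ^ 2, by positivity, 1 / (2 * π), by positivity, ?_⟩
  intro θ h hθ hh hε
  rw [aux_sigma θ h hθ hh]
  have ha : 0 < θ * h := by positivity
  generalize θ * h = a at *
  obtain ⟨u, hu⟩ : ∃ u, u = 2 * π * a := ⟨_, rfl⟩
  have hu0 : 0 < u := by rw [hu]; positivity
  have hu1 : u ≤ 1 := by
    rw [hu]
    rw [lt_div_iff₀ (by positivity)] at hε
    linarith
  have hs : u ≤ Real.sinh u := Real.self_le_sinh_iff.2 hu0.le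
  have hs0 : 0 < Real.sinh u := lt_of_lt_of_le hu0 hs
  have hb := aux_asymp u hu0 hu1
  have e1 : (2 * π ^ 2 / 3) * a = π * (u / 3) := by rw [hu]; ring
  have e2 : π * (2 * π) ^ 2 * a ^ 2 = π * u ^ 2 := by rw [hu]; ring
  rw [e1, e2, ← hu]
  have e3 : π - π * (Real.sinh u - u * rexp (-u)) / (u * Real.sinh u) - π * (u / 3)
      = π * ((u * Real.sinh u - Real.sinh u + u * rexp (-u) - u ^ 2 / 3 * Real.sinh u)
        / (u * Real.sinh u)) := by
    field_simp
    ring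
  rw [e3, abs_mul, abs_of_pos hπ, abs_div, abs_of_pos (mul_pos hu0 hs0)]
  refine mul_le_mul_of_nonneg_left ?_ hπ.le
  rw [div_le_iff₀ (mul_pos hu0 hs0)]
  refine hb.trans ?_
  calc u ^ 4 = u ^ 2 * (u * u) := by ring
    _ ≤ u ^ 2 * (u * Real.sinh u) := by gcongr
end
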